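/- arXiv:0801.3556 — 2 statements merged into one kernel-verified Lean document; each statement's English description precedes it below -/
import Mathlib

section
/- There exists an absolute constant C > 0 such that the following holds. Let (Ω, μ) be a probability space and (φ_j)_{j=1}^n an orthonormal system in L₂(Ω, μ) (complex-valued) with ‖φ_j‖_{L∞} ≤ L for all 1 ≤ j ≤ n. For every p ∈ (1, 2) and every integer k with 2 ≤ k < n there exists a subset I ⊆ {1, …, n} with |I| ≥ n − k such that for every a = (a_i) ∈ ℂⁿ, ‖∑_{i ∈ I} a_i φ_i‖_{L₂} ≤ (C/(p−1)^{5/2}) · L · √(n/k) · √(log k) · ‖∑_{i ∈ I} a_i φ_i‖_{L_p}. -/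
open MeasureTheory

/-
Let `F x = ∫ ‖∑ i, x i * φ i‖ ^ p`. By the uniform convexity of `L_p`, the average of `F` at two
points of `{F ≤ 1}` exceeds its value at their midpoint by at least `(p - 1) / (48 L²)` times
the square of the difference of any coordinate. So if one starts at a minimizer of `F` on this unit
ball and repeatedly passes to the minimizer on the part of the current region which some coordinate
separates from the current point by about `2⁻ʲ`, each step raises the minimum by a multiple of
`4⁻ʲ`. As `F ≤ 1`, every point of the ball is approximated in all coordinates up to `2⁻ʲ` by a
minimizer that is encoded by few such cuts.

Let `x` and `y` be independent uniformly distributed `k`-tuples of indices. If some `f` in the unit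
ball vanishes along `x` and is large along `y`, then at some scale its code has a center which is
small along `x` but exceeds `2⁻ʲ` at many places of `y`. Swapping `x s` and `y s` independently for
each `s` does not change the joint distribution, and it produces this situation for a given code
with a probability exponentially small in the number of these places, which beats the number of
codes. Hence there is an `x` such that every `f` in the unit ball vanishing along `x` is small along
at least half of all `y`, and therefore has a small `ℓ₂` norm. The set `I` consists of the indices
missed by `x`.
-/

section PointwiseConvexity

variable {p : ℝ}

lemma hasDerivAt_one_add_rpow_add_one_sub_rpow (hp : 1 ≤ p) (x : ℝ) :
    HasDerivAt (fun y : ℝ => (1 + y) ^ p + (1 - y) ^ p)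
      (p * ((1 + x) ^ (p - 1) - (1 - x) ^ (p - 1))) x := by
  have hadd := ((hasDerivAt_id' x).const_add 1).rpow_const (p := p) (Or.inr hp)
  have hsub := ((hasDerivAt_id' x).const_sub 1).rpow_const (p := p) (Or.inr hp)
  exact (hadd.fun_add hsub).congr_deriv (by ring)

lemma two_add_mul_sq_le_one_add_rpow_add_one_sub_rpow (hp : 1 ≤ p) (hp2 : p ≤ 2) {x : ℝ}
    (hx0 : 0 ≤ x) (hx1 : x ≤ 1) :
    2 + p * (p - 1) / 2 * x ^ 2 ≤ (1 + x) ^ p + (1 - x) ^ p := by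
  let g : ℝ → ℝ := fun y => (1 + y) ^ p + (1 - y) ^ p - p * (p - 1) / 2 * y ^ 2
  have hderiv (y : ℝ) : HasDerivAt g
      (p * ((1 + y) ^ (p - 1) - (1 - y) ^ (p - 1)) - p * (p - 1) * y) y := by
    have hsq := (hasDerivAt_pow 2 y).const_mul (p * (p - 1) / 2)
    exact ((hasDerivAt_one_add_rpow_add_one_sub_rpow hp y).fun_sub hsq).congr_deriv (by
      push_cast; ring)
  have hderiv_nonneg : ∀ y ∈ interior (Set.Icc (0 : ℝ) 1), 0 ≤ deriv g y := by
    intro y hy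
    rw [interior_Icc] at hy
    rw [(hderiv y).deriv]
    have hone : 1 ≤ (1 + y) ^ (p - 1) := Real.one_le_rpow (by linarith [hy.1]) (by linarith)
    have hbernoulli : (1 + -y) ^ (p - 1) ≤ 1 + (p - 1) * -y :=
      rpow_one_add_le_one_add_mul_self (by linarith [hy.2]) (by linarith) (by linarith)
    rw [← sub_eq_add_neg] at hbernoulli
    nlinarith
  have hmono : MonotoneOn g (Set.Icc 0 1) :=
    monotoneOn_of_deriv_nonneg (convex_Icc 0 1)
      (fun y _ => (hderiv y).continuousAt.continuousWithinAt)
      (fun y _ => (hderiv y).differentiableAt.differentiableWithinAt) hderiv_nonneg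
  have hg0 : g 0 = 2 := by norm_num [g]
  have hgx : g 0 ≤ g x := hmono (Set.left_mem_Icc.2 zero_le_one) ⟨hx0, hx1⟩ hx0
  rw [hg0] at hgx
  simp only [g] at hgx
  linarith

lemma rpow_eq_rpow_sub_two_mul_sq {m : ℝ} (hm : 0 < m) (p : ℝ) : m ^ p = m ^ (p - 2) * m ^ 2 := by
  rw [← Real.rpow_add_natCast hm.ne', Nat.cast_ofNat, sub_add_cancel]

lemma rpow_average_add_le (hp : 1 ≤ p) (hp2 : p ≤ 2) {a b : ℝ} (ha : 0 ≤ a) (hb : 0 ≤ b)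
    (hab : 0 < a + b) :
    ((a + b) / 2) ^ p + p * (p - 1) / 16 * ((a - b) ^ 2 * ((a + b) / 2) ^ (p - 2))
      ≤ (a ^ p + b ^ p) / 2 := by
  wlog hba : b ≤ a generalizing a b
  · rw [add_comm a b, add_comm (a ^ p), sub_sq_comm]
    exact this hb ha (by rwa [add_comm]) (le_of_not_ge hba)
  set m := (a + b) / 2 with hm_def
  have hm : 0 < m := half_pos hab
  set x := (a - b) / (2 * m)
  have hx0 : 0 ≤ x := div_nonneg (sub_nonneg.2 hba) (by positivity)
  have hx1 : x ≤ 1 := (div_le_one (by positivity)).2 (by linarith)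
  have hxm : 2 * m * x = a - b := mul_div_cancel₀ _ (by positivity)
  have ha_eq : a ^ p = m ^ p * (1 + x) ^ p := by
    rw [← Real.mul_rpow hm.le (by linarith), show a = m * (1 + x) by linarith]
  have hb_eq : b ^ p = m ^ p * (1 - x) ^ p := by
    rw [← Real.mul_rpow hm.le (by linarith), show b = m * (1 - x) by linarith]
  calc m ^ p + p * (p - 1) / 16 * ((a - b) ^ 2 * m ^ (p - 2))
      = m ^ p * (1 + p * (p - 1) / 4 * x ^ 2) := by
        rw [← hxm, rpow_eq_rpow_sub_two_mul_sq hm p]; ring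
    _ ≤ m ^ p * (((1 + x) ^ p + (1 - x) ^ p) / 2) := by
        gcongr
        linarith [two_add_mul_sq_le_one_add_rpow_add_one_sub_rpow hp hp2 hx0 hx1]
    _ = (a ^ p + b ^ p) / 2 := by rw [ha_eq, hb_eq]; ring

-- The tangent line of the concave function `t ↦ t ^ (p / 2)` at `t = m ^ 2`.
lemma rpow_le_rpow_add_mul_sq_sub_sq (hp : 0 ≤ p) (hp2 : p ≤ 2) {r m : ℝ} (hr : 0 ≤ r)
    (hm : 0 < m) : r ^ p ≤ m ^ p + p / 2 * (m ^ (p - 2) * (r ^ 2 - m ^ 2)) := by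
  have hbernoulli := rpow_one_add_le_one_add_mul_self (s := (r / m) ^ 2 - 1) (p := p / 2)
    (by linarith [sq_nonneg (r / m)]) (by linarith) (by linarith)
  have hratio : (1 + ((r / m) ^ 2 - 1)) ^ (p / 2) = r ^ p / m ^ p := by
    rw [add_sub_cancel, ← Real.rpow_natCast, ← Real.rpow_mul (by positivity),
      ← Real.div_rpow hr hm.le, Nat.cast_ofNat, mul_div_cancel₀ p two_ne_zero]
  rw [hratio, div_le_iff₀ (by positivity)] at hbernoulli
  refine hbernoulli.trans_eq ?_
  rw [rpow_eq_rpow_sub_two_mul_sq hm p]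
  field_simp

variable {E : Type*} [NormedAddCommGroup E] [InnerProductSpace ℝ E]

lemma rpow_norm_average_add_le (hp : 1 ≤ p) (hp2 : p ≤ 2) (z w : E) (hzw : 0 < ‖z‖ + ‖w‖) :
    (‖z + w‖ / 2) ^ p + (p - 1) / 16 * (‖z - w‖ ^ 2 * ((‖z‖ + ‖w‖) / 2) ^ (p - 2))
      ≤ (‖z‖ ^ p + ‖w‖ ^ p) / 2 := by
  have hscalar := rpow_average_add_le hp hp2 (norm_nonneg z) (norm_nonneg w) hzw
  have htangent := rpow_le_rpow_add_mul_sq_sub_sq (p := p) (by linarith) hp2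
    (by positivity : 0 ≤ ‖z + w‖ / 2) (half_pos hzw)
  set A := ((‖z‖ + ‖w‖) / 2) ^ (p - 2)
  have hparallelogram : (‖z + w‖ / 2) ^ 2 - ((‖z‖ + ‖w‖) / 2) ^ 2 =
      -(‖z - w‖ ^ 2 - (‖z‖ - ‖w‖) ^ 2) / 4 := by
    linarith [parallelogram_law_with_norm ℝ z w]
  rw [hparallelogram] at htangent
  have hgap : 0 ≤ A * (‖z - w‖ ^ 2 - (‖z‖ - ‖w‖) ^ 2) := by
    refine mul_nonneg (by positivity) (sub_nonneg.2 ?_)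
    exact sq_le_sq.2 ((abs_norm_sub_norm_le z w).trans (le_abs_self _))
  have hA : 0 ≤ A * ‖z - w‖ ^ 2 := by positivity
  nlinarith [mul_nonneg (by linarith : (0 : ℝ) ≤ p - 1) hA,
    mul_nonneg (by nlinarith : (0 : ℝ) ≤ p * (3 - p)) hgap,
    mul_nonneg (by nlinarith : (0 : ℝ) ≤ (p - 1) * (p - 1)) hA]

lemma two_mul_le_sq_mul_rpow_add (l d : ℝ) {m : ℝ} (hm : 0 < m) (q : ℝ) :
    2 * l * d ≤ d ^ 2 * m ^ (-q) + l ^ 2 * m ^ q := by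
  have hinv : m ^ q * m ^ (-q) = 1 := by rw [← Real.rpow_add hm, add_neg_cancel, Real.rpow_zero]
  have hsq : 0 ≤ m ^ q * (d * m ^ (-q) - l) ^ 2 := by positivity
  linear_combination hsq + (d ^ 2 * m ^ (-q) - 2 * l * d) * hinv

lemma rpow_average_le_one_add (hp : 1 ≤ p) (hp2 : p ≤ 2) {a b : ℝ} (ha : 0 ≤ a) (hb : 0 ≤ b) :
    ((a + b) / 2) ^ (2 - p) ≤ 1 + a ^ p + b ^ p := by
  have hap : 0 ≤ a ^ p := by positivity
  have hbp : 0 ≤ b ^ p := by positivity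
  rcases le_total ((a + b) / 2) 1 with hle | hge
  · linarith [Real.rpow_le_one (by positivity) hle (by linarith : 0 ≤ 2 - p)]
  · calc ((a + b) / 2) ^ (2 - p) ≤ ((a + b) / 2) ^ p :=
          Real.rpow_le_rpow_of_exponent_le hge (by linarith)
      _ ≤ max a b ^ p := by
          gcongr
          linarith [le_max_left a b, le_max_right a b]
      _ ≤ 1 + a ^ p + b ^ p := by
          rcases max_choice a b with h | h <;> rw [h] <;> linarith

-- The weight `((‖z‖ + ‖w‖) / 2) ^ (p - 2)` of `rpow_norm_average_add_le` is traded for a free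
-- parameter `l`, so that integration in `z` and `w` needs no Hölder inequality.
lemma rpow_norm_average_add_linearized_le (hp : 1 ≤ p) (hp2 : p ≤ 2) (z w : E) (l : ℝ) :
    (‖z + w‖ / 2) ^ p + (p - 1) / 16 * (2 * l * ‖z - w‖ - l ^ 2 * (1 + ‖z‖ ^ p + ‖w‖ ^ p))
      ≤ (‖z‖ ^ p + ‖w‖ ^ p) / 2 := by
  rcases (by positivity : 0 ≤ ‖z‖ + ‖w‖).eq_or_lt with hzero | hpos
  · have hz : z = 0 := norm_eq_zero.1 (by linarith [norm_nonneg z, norm_nonneg w])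
    have hw : w = 0 := norm_eq_zero.1 (by linarith [norm_nonneg z, norm_nonneg w])
    have h0 : (0 : ℝ) ^ p = 0 := Real.zero_rpow (by linarith)
    simp only [hz, hw, add_zero, sub_zero, norm_zero, zero_div, h0]
    nlinarith [mul_nonneg (by linarith : 0 ≤ p - 1) (sq_nonneg l)]
  · have hyoung := two_mul_le_sq_mul_rpow_add l ‖z - w‖ (half_pos hpos) (2 - p)
    rw [neg_sub] at hyoung
    have hweight := mul_le_mul_of_nonneg_left
      (rpow_average_le_one_add hp hp2 (norm_nonneg z) (norm_nonneg w)) (sq_nonneg l)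
    refine le_trans ?_ (rpow_norm_average_add_le hp hp2 z w hpos)
    gcongr _ + _ * ?_
    linarith

end PointwiseConvexity

section IntegralConvexity

variable {E Ω : Type*} [NormedAddCommGroup E] [MeasurableSpace Ω] {μ : Measure Ω} {p : ℝ}

lemma integrable_norm_rpow_of_memLp_ofReal (hp : 0 < p) {f : Ω → E}
    (hf : MemLp f (ENNReal.ofReal p) μ) : Integrable (fun ω => ‖f ω‖ ^ p) μ := by
  have h := hf.integrable_norm_rpow (ENNReal.ofReal_pos.2 hp).ne' ENNReal.ofReal_ne_top
  rwa [ENNReal.toReal_ofReal hp.le] at h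

lemma integral_rpow_norm_average_add_le [InnerProductSpace ℝ E] [IsProbabilityMeasure μ]
    (hp : 1 ≤ p) (hp2 : p ≤ 2) {f g : Ω → E}
    (hf : MemLp f (ENNReal.ofReal p) μ) (hg : MemLp g (ENNReal.ofReal p) μ)
    (hf1 : ∫ ω, ‖f ω‖ ^ p ∂μ ≤ 1) (hg1 : ∫ ω, ‖g ω‖ ^ p ∂μ ≤ 1) :
    ∫ ω, (‖f ω + g ω‖ / 2) ^ p ∂μ + (p - 1) / 48 * (∫ ω, ‖f ω - g ω‖ ∂μ) ^ 2
      ≤ (∫ ω, ‖f ω‖ ^ p ∂μ + ∫ ω, ‖g ω‖ ^ p ∂μ) / 2 := by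
  have hp0 : 0 < p := by linarith
  have hfp : Integrable (fun ω => ‖f ω‖ ^ p) μ := integrable_norm_rpow_of_memLp_ofReal hp0 hf
  have hgp : Integrable (fun ω => ‖g ω‖ ^ p) μ := integrable_norm_rpow_of_memLp_ofReal hp0 hg
  have hadd : Integrable (fun ω => (‖f ω + g ω‖ / 2) ^ p) μ := by
    simp_rw [Real.div_rpow (norm_nonneg _) zero_le_two]
    exact (integrable_norm_rpow_of_memLp_ofReal hp0 (hf.add hg)).div_const _
  have hsub : Integrable (fun ω => ‖f ω - g ω‖) μ :=
    ((hf.sub hg).integrable (ENNReal.one_le_ofReal.2 hp)).norm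
  set d := ∫ ω, ‖f ω - g ω‖ ∂μ with hd
  have hint := integral_mono (by fun_prop) (by fun_prop) fun ω =>
    rpow_norm_average_add_linearized_le hp hp2 (f ω) (g ω) (d / 3)
  rw [integral_add hadd (by fun_prop), integral_const_mul,
    integral_sub (by fun_prop) (by fun_prop), integral_const_mul, integral_const_mul,
    integral_add (by fun_prop) hgp, integral_add (by fun_prop) hfp, integral_div,
    integral_add hfp hgp, ← hd, integral_const, probReal_univ, one_smul] at hint
  refine le_trans ?_ hint
  have hsum : 0 ≤ (p - 1) * d ^ 2 * (2 - ∫ ω, ‖f ω‖ ^ p ∂μ - ∫ ω, ‖g ω‖ ^ p ∂μ) :=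
    mul_nonneg (mul_nonneg (by linarith) (sq_nonneg d)) (by linarith)
  linarith

end IntegralConvexity

section UniformConvexity

variable {V ι κ 𝕜 : Type*} [AddCommGroup V] [Module ℝ V] [RCLike 𝕜]

/-- `F` behaves on its unit ball `{F ≤ 1}` like the `p`-th power of a uniformly convex norm, with a
modulus of convexity that dominates each of the functionals `c i`. In the application `F x` is
`∫ ‖∑ i, x i * φ i‖ ^ p` and the `c i` are multiples of the coordinates. -/
structure IsUniformlyConvexAlong (F : V → ℝ) (c : ι → V →ₗ[ℝ] 𝕜) : Prop where
  nonneg : ∀ x, 0 ≤ F x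
  map_zero : F 0 = 0
  map_midpoint_add_le : ∀ x y, F x ≤ 1 → F y ≤ 1 → ∀ i,
    F (midpoint ℝ x y) + ‖c i (x - y)‖ ^ 2 ≤ (F x + F y) / 2

namespace IsUniformlyConvexAlong

variable {F : V → ℝ} {c : ι → V →ₗ[ℝ] 𝕜}

lemma comp (h : IsUniformlyConvexAlong F c) (g : κ → ι) :
    IsUniformlyConvexAlong F (fun j => c (g j)) :=
  ⟨h.nonneg, h.map_zero, fun x y hx hy j => h.map_midpoint_add_le x y hx hy (g j)⟩

lemma norm_sq_le (h : IsUniformlyConvexAlong F c) {x : V} (hx : F x ≤ 1) (i : ι) :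
    ‖c i x‖ ^ 2 ≤ F x / 2 := by
  have hmid := h.map_midpoint_add_le x 0 hx (h.map_zero.trans_le zero_le_one) i
  rw [sub_zero, h.map_zero, add_zero] at hmid
  linarith [h.nonneg (midpoint ℝ x 0)]

lemma norm_le_one (h : IsUniformlyConvexAlong F c) {x : V} (hx : F x ≤ 1) (i : ι) :
    ‖c i x‖ ≤ 1 := by
  nlinarith [h.norm_sq_le hx i]

end IsUniformlyConvexAlong

end UniformConvexity

section Directions

variable {𝕜 : Type*} [RCLike 𝕜]

/-- The four unit directions `1, -1, i, -i` in which a scalar is compared with its norm. Over `ℝ`,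
where `RCLike.I = 0`, the last two are harmless. -/
def unitDirection : Fin 4 → 𝕜 := ![1, -1, RCLike.I, -RCLike.I]

lemma re_unitDirection_mul_le_norm (m : Fin 4) (w : 𝕜) : RCLike.re (unitDirection m * w) ≤ ‖w‖ := by
  have hdir : ‖(unitDirection m : 𝕜)‖ ≤ 1 := by
    have hI : ‖(RCLike.I : 𝕜)‖ ≤ 1 := by
      rw [RCLike.norm_I]
      split_ifs <;> norm_num
    fin_cases m <;> simp [unitDirection, hI]
  calc RCLike.re (unitDirection m * w) ≤ ‖unitDirection m * w‖ := RCLike.re_le_norm _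
    _ = ‖(unitDirection m : 𝕜)‖ * ‖w‖ := norm_mul _ _
    _ ≤ ‖w‖ := mul_le_of_le_one_left (norm_nonneg w) hdir

lemma exists_norm_div_two_le_re_unitDirection_mul (w : 𝕜) :
    ∃ m, ‖w‖ / 2 ≤ RCLike.re (unitDirection m * w) := by
  by_contra! hcon
  have h0 : RCLike.re w < ‖w‖ / 2 := by simpa [unitDirection] using hcon 0
  have h1 : -RCLike.re w < ‖w‖ / 2 := by simpa [unitDirection] using hcon 1
  have h2 : -RCLike.im w < ‖w‖ / 2 := by simpa [unitDirection] using hcon 2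
  have h3 : RCLike.im w < ‖w‖ / 2 := by simpa [unitDirection] using hcon 3
  have hre : RCLike.re w ^ 2 < (‖w‖ / 2) ^ 2 := sq_lt_sq' (by linarith) h0
  have him : RCLike.im w ^ 2 < (‖w‖ / 2) ^ 2 := sq_lt_sq' (by linarith) h3
  linarith [RCLike.norm_sq_eq_def (z := w), sq_nonneg ‖w‖]

end Directions

section NearMinimizer

variable {V : Type*} [Nonempty V]

/-- A minimizer of `F` on `C` up to an error `ε` (a junk value if `C` is empty). -/
noncomputable def nearMinimizer (F : V → ℝ) (ε : ℝ) (C : Set V) : V :=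
  Classical.epsilon fun g => g ∈ C ∧ ∀ x ∈ C, F g ≤ F x + ε

lemma nearMinimizer_spec {F : V → ℝ} (hF : ∀ x, 0 ≤ F x) {ε : ℝ} (hε : 0 < ε) {C : Set V}
    (hC : C.Nonempty) : nearMinimizer F ε C ∈ C ∧ ∀ x ∈ C, F (nearMinimizer F ε C) ≤ F x + ε := by
  have hbdd : BddBelow (F '' C) := ⟨0, Set.forall_mem_image.2 fun x _ => hF x⟩
  obtain ⟨_, ⟨g, hg, rfl⟩, hlt⟩ :=
    exists_lt_of_csInf_lt (hC.image F) (lt_add_of_pos_right (sInf (F '' C)) hε)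
  refine Classical.epsilon_spec (p := fun g => g ∈ C ∧ ∀ x ∈ C, F g ≤ F x + ε)
    ⟨g, hg, fun x hx => ?_⟩
  linarith [csInf_le hbdd (Set.mem_image_of_mem F hx)]

end NearMinimizer

section GreedyCodes

variable {V ι 𝕜 : Type*} [AddCommGroup V] [Module ℝ V] [RCLike 𝕜] {l : ℕ}

/-- A symbol of the codes below: a functional, a direction in `𝕜` and a scale `j`, which stands for
the length `2⁻ʲ`. -/
abbrev Cut (ι : Type*) (l : ℕ) := ι × Fin 4 × Fin l

/-- The points which the functional of the cut `σ` separates from `g`, in the direction of `σ`, by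
half the length of its scale. -/
def cutCap (c : ι → V →ₗ[ℝ] 𝕜) (g : V) (σ : Cut ι l) : Set V :=
  {x | (1 / 2) ^ (σ.2.2 : ℕ) / 2 ≤ RCLike.re (unitDirection σ.2.1 * c σ.1 (x - g))}

/-- The part of the unit ball `{F ≤ 1}` described by a code, a list of cuts with the latest one
first: each cut keeps the cap around the near-minimizer of `F` on the region reached so far. -/
def greedyRegion (F : V → ℝ) (c : ι → V →ₗ[ℝ] 𝕜) : List (Cut ι l) → Set V
  | [] => {x | F x ≤ 1}
  | σ :: D =>
    greedyRegion F c D ∩ cutCap c (nearMinimizer F ((1 / 4) ^ l / 8) (greedyRegion F c D)) σ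

/-- The near-minimizer of `F` on the region of a code, which serves as the approximation of every
point with this code. -/
noncomputable def greedyCenter (F : V → ℝ) (c : ι → V →ₗ[ℝ] 𝕜) (D : List (Cut ι l)) : V :=
  nearMinimizer F ((1 / 4) ^ l / 8) (greedyRegion F c D)

/-- The sum of the squared lengths `4⁻ʲ` of the cuts of a code. -/
noncomputable def codeWeight (D : List (Cut ι l)) : ℝ :=
  (D.map fun σ => (1 / 4 : ℝ) ^ (σ.2.2 : ℕ)).sum

/-- `D` is a code for `f` along which the minimum of `F` has grown in proportion to the weight. -/
def IsCodeOf (F : V → ℝ) (c : ι → V →ₗ[ℝ] 𝕜) (f : V) (D : List (Cut ι l)) : Prop :=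
  f ∈ greedyRegion F c D ∧ codeWeight D / 4 ≤ F (greedyCenter F c D)

lemma codeWeight_cons (σ : Cut ι l) (D : List (Cut ι l)) :
    codeWeight (σ :: D) = (1 / 4) ^ (σ.2.2 : ℕ) + codeWeight D :=
  List.sum_cons

variable {F : V → ℝ} {c : ι → V →ₗ[ℝ] 𝕜}

lemma greedyRegion_subset_unitBall (D : List (Cut ι l)) : greedyRegion F c D ⊆ {x | F x ≤ 1} := by
  induction D with
  | nil => exact subset_rfl
  | cons σ D ih => exact Set.inter_subset_left.trans ih

lemma midpoint_mem_cutCap {g x y : V} {σ : Cut ι l} (hx : x ∈ cutCap c g σ)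
    (hy : y ∈ cutCap c g σ) : midpoint ℝ x y ∈ cutCap c g σ := by
  have hre : RCLike.re (unitDirection σ.2.1 * c σ.1 (midpoint ℝ x y - g)) =
      (RCLike.re (unitDirection σ.2.1 * c σ.1 (x - g)) +
        RCLike.re (unitDirection σ.2.1 * c σ.1 (y - g))) / 2 := by
    have hsub : midpoint ℝ x y - g = (1 / 2 : ℝ) • ((x - g) + (y - g)) := by
      rw [midpoint_eq_smul_add, invOf_eq_inv]
      module
    rw [hsub, map_smul, map_add, mul_smul_comm, RCLike.smul_re, mul_add, map_add]
    ring
  simp only [cutCap, Set.mem_ofPred_eq] at hx hy ⊢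
  rw [hre]
  linarith

namespace IsUniformlyConvexAlong

lemma greedyCenter_mem (h : IsUniformlyConvexAlong F c) {D : List (Cut ι l)}
    (hD : (greedyRegion F c D).Nonempty) : greedyCenter F c D ∈ greedyRegion F c D :=
  (nearMinimizer_spec h.nonneg (by positivity) hD).1

lemma greedyCenter_le (h : IsUniformlyConvexAlong F c) {D : List (Cut ι l)} {x : V}
    (hx : x ∈ greedyRegion F c D) : F (greedyCenter F c D) ≤ F x + (1 / 4) ^ l / 8 :=
  (nearMinimizer_spec h.nonneg (by positivity) ⟨x, hx⟩).2 x hx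

lemma midpoint_mem_greedyRegion [Nonempty ι] (h : IsUniformlyConvexAlong F c) {D : List (Cut ι l)}
    {x y : V} (hx : x ∈ greedyRegion F c D) (hy : y ∈ greedyRegion F c D) :
    midpoint ℝ x y ∈ greedyRegion F c D := by
  induction D with
  | nil =>
    have hx1 : F x ≤ 1 := hx
    have hy1 : F y ≤ 1 := hy
    have hmid := h.map_midpoint_add_le x y hx1 hy1 (Classical.arbitrary ι)
    change F (midpoint ℝ x y) ≤ 1
    linarith [sq_nonneg ‖c (Classical.arbitrary ι) (x - y)‖]
  | cons σ D ih => exact ⟨ih hx.1 hy.1, midpoint_mem_cutCap hx.2 hy.2⟩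

lemma codeWeight_le_four (h : IsUniformlyConvexAlong F c) {f : V} {D : List (Cut ι l)}
    (hD : IsCodeOf F c f D) : codeWeight D ≤ 4 := by
  have hcenter : F (greedyCenter F c D) ≤ 1 :=
    greedyRegion_subset_unitBall D (h.greedyCenter_mem ⟨f, hD.1⟩)
  linarith [hD.2]

-- The midpoint of `x` and the old center lies in the old region, so `F` at the old center exceeds
-- its value at the midpoint by at most the tolerance: uniform convexity turns the distance between
-- the two points into growth of `F`.
lemma greedyCenter_add_le_of_mem_greedyRegion_cons (h : IsUniformlyConvexAlong F c)
    {D : List (Cut ι l)} {σ : Cut ι l} {x : V} (hx : x ∈ greedyRegion F c (σ :: D)) :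
    F (greedyCenter F c D) + (1 / 4) ^ (σ.2.2 : ℕ) / 4 ≤ F x := by
  obtain ⟨hxD, hxcap⟩ := hx
  have : Nonempty ι := ⟨σ.1⟩
  have hgD : greedyCenter F c D ∈ greedyRegion F c D := h.greedyCenter_mem ⟨x, hxD⟩
  have hmin := h.greedyCenter_le (h.midpoint_mem_greedyRegion hxD hgD)
  have hconv := h.map_midpoint_add_le x (greedyCenter F c D) (greedyRegion_subset_unitBall D hxD)
    (greedyRegion_subset_unitBall D hgD) σ.1
  have hdist : (1 / 2) ^ (σ.2.2 : ℕ) / 2 ≤ ‖c σ.1 (x - greedyCenter F c D)‖ :=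
    hxcap.trans (re_unitDirection_mul_le_norm _ _)
  have hdist_sq : (1 / 4) ^ (σ.2.2 : ℕ) / 4 ≤ ‖c σ.1 (x - greedyCenter F c D)‖ ^ 2 := by
    calc (1 / 4 : ℝ) ^ (σ.2.2 : ℕ) / 4 = ((1 / 2) ^ (σ.2.2 : ℕ) / 2) ^ 2 := by
          rw [div_pow ((1 / 2 : ℝ) ^ _), pow_right_comm]; norm_num
      _ ≤ _ := by gcongr
  have htolerance : (1 / 4 : ℝ) ^ l ≤ (1 / 4) ^ (σ.2.2 : ℕ) :=
    pow_le_pow_of_le_one (by norm_num) (by norm_num) σ.2.2.is_le'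
  linarith

lemma exists_isCodeOf_cons (h : IsUniformlyConvexAlong F c) {f : V} {D : List (Cut ι l)}
    (hD : IsCodeOf F c f D) {i : ι} {j : Fin l}
    (hi : (1 / 2) ^ (j : ℕ) < ‖c i (f - greedyCenter F c D)‖) :
    ∃ m, IsCodeOf F c f ((i, m, j) :: D) := by
  obtain ⟨m, hm⟩ := exists_norm_div_two_le_re_unitDirection_mul (c i (f - greedyCenter F c D))
  have hf : f ∈ greedyRegion F c ((i, m, j) :: D) :=
    ⟨hD.1, (div_le_div_of_nonneg_right hi.le zero_le_two).trans hm⟩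
  refine ⟨m, hf, ?_⟩
  rw [codeWeight_cons]
  linarith [h.greedyCenter_add_le_of_mem_greedyRegion_cons (h.greedyCenter_mem ⟨f, hf⟩), hD.2]

lemma exists_isCodeOf_approx (h : IsUniformlyConvexAlong F c) {f : V} {D : List (Cut ι l)}
    (hD : IsCodeOf F c f D) (j : Fin l) :
    ∃ D' : List (Cut ι l), IsCodeOf F c f D' ∧
      codeWeight D' = codeWeight D + ((D'.length : ℝ) - D.length) * (1 / 4) ^ (j : ℕ) ∧
      ∀ i, ‖c i (f - greedyCenter F c D')‖ ≤ (1 / 2) ^ (j : ℕ) := by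
  obtain ⟨N, hN⟩ := exists_nat_gt ((4 - codeWeight D) / (1 / 4) ^ (j : ℕ))
  rw [div_lt_iff₀ (by positivity)] at hN
  induction N generalizing D with
  | zero =>
    rw [Nat.cast_zero, zero_mul] at hN
    linarith [h.codeWeight_le_four hD]
  | succ N ih =>
    by_cases! hfar : ∃ i, (1 / 2) ^ (j : ℕ) < ‖c i (f - greedyCenter F c D)‖
    · obtain ⟨i, hi⟩ := hfar
      obtain ⟨m, hm⟩ := h.exists_isCodeOf_cons hD hi
      obtain ⟨D', hD', hweight, happrox⟩ := ih hm (by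
        rw [codeWeight_cons]
        push_cast at hN
        linarith)
      refine ⟨D', hD', ?_, happrox⟩
      rw [hweight, codeWeight_cons, List.length_cons]
      push_cast
      ring
    · exact ⟨D, hD, by simp, hfar⟩

-- Every cut made at scale `j` is present in all later codes `D s`, `s ≥ j`, and so contributes at
-- most `∑ s ≥ j, 4⁻ˢ = (4 / 3) 4⁻ʲ` to the sum of the lengths.
lemma exists_isCodeOf_chain (h : IsUniformlyConvexAlong F c) {f : V} (hf : F f ≤ 1) {J : ℕ}
    (hJ : J ≤ l) :
    ∃ D : ℕ → List (Cut ι l), IsCodeOf F c f (D J) ∧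
      (∀ j < J, ∀ i, ‖c i (f - greedyCenter F c (D j))‖ ≤ (1 / 2) ^ j) ∧
      ∑ j ∈ Finset.range J, (1 / 4 : ℝ) ^ j * (D j).length
        + 4 / 3 * (1 / 4) ^ J * (D J).length ≤ 4 / 3 * codeWeight (D J) := by
  induction J with
  | zero => exact ⟨fun _ => [], ⟨hf, by simp [codeWeight, h.nonneg]⟩, by simp, by simp [codeWeight]⟩
  | succ J ih =>
    obtain ⟨D, hD, happrox, hlength⟩ := ih (by omega)
    obtain ⟨D', hD', hweight, happrox'⟩ := h.exists_isCodeOf_approx hD ⟨J, hJ⟩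
    refine ⟨fun j => if j < J then D j else D', by simpa using hD', fun j hj => ?_, ?_⟩
    · rcases (Nat.lt_succ_iff_lt_or_eq.1 hj) with hlt | rfl
      · simpa only [hlt, if_true] using happrox j hlt
      · simpa only [lt_irrefl, if_false] using happrox'
    · have hsum : ∑ j ∈ Finset.range J, (1 / 4 : ℝ) ^ j * (if j < J then D j else D').length =
          ∑ j ∈ Finset.range J, (1 / 4 : ℝ) ^ j * (D j).length :=
        Finset.sum_congr rfl fun j hj => by rw [if_pos (Finset.mem_range.1 hj)]
      beta_reduce
      rw [Finset.sum_range_succ, hsum, if_neg (lt_irrefl J), if_neg (by omega), hweight, pow_succ]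
      linarith

lemma exists_codes_approx (h : IsUniformlyConvexAlong F c) (l : ℕ) {f : V} (hf : F f ≤ 1) :
    ∃ D : ℕ → List (Cut ι l), (∀ j < l, ∀ i, ‖c i (f - greedyCenter F c (D j))‖ ≤ (1 / 2) ^ j) ∧
      ∑ j ∈ Finset.range l, (1 / 4 : ℝ) ^ j * (D j).length ≤ 16 / 3 := by
  obtain ⟨D, hD, happrox, hlength⟩ := h.exists_isCodeOf_chain hf le_rfl
  refine ⟨D, happrox, ?_⟩
  have hlast : 0 ≤ 4 / 3 * (1 / 4 : ℝ) ^ l * (D l).length := by positivity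
  linarith [h.codeWeight_le_four hD]

end IsUniformlyConvexAlong

end GreedyCodes

section LayerCake

open Finset

lemma sq_le_add_sum_filter_lt {v : ℝ} (hv0 : 0 ≤ v) (hv4 : v ≤ 4) (l : ℕ) :
    v ^ 2 ≤ 16 * (1 / 4) ^ l + ∑ j ∈ range l with 2 * (1 / 2) ^ j < v, 12 * (1 / 4 : ℝ) ^ j := by
  induction l with
  | zero =>
    rw [range_zero, filter_empty, sum_empty, pow_zero]
    nlinarith
  | succ l ih =>
    by_cases! hlt : 2 * (1 / 2) ^ l < v
    · rw [range_add_one, filter_insert, if_pos hlt, sum_insert (by simp), pow_succ (1 / 4 : ℝ)]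
      linarith
    · calc v ^ 2 ≤ (2 * (1 / 2) ^ l) ^ 2 := by gcongr
        _ = 16 * (1 / 4) ^ (l + 1) := by rw [mul_pow, pow_right_comm, pow_succ]; norm_num; ring
        _ ≤ _ := le_add_of_nonneg_right (sum_nonneg fun j _ => by positivity)

lemma sum_sq_le_of_card_filter_lt_le {κ : Type*} [Fintype κ] {v : κ → ℝ} (hv0 : ∀ s, 0 ≤ v s)
    (hv4 : ∀ s, v s ≤ 4) {l : ℕ} (hl : Fintype.card κ ≤ 4 ^ l) {a : ℝ} (ha : 0 ≤ a) {N : ℕ → ℝ}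
    (hcard : ∀ j < l, (#{s | 2 * (1 / 2) ^ j < v s} : ℝ) ≤ a * (N j + 1))
    (hN : ∑ j ∈ range l, (1 / 4 : ℝ) ^ j * N j ≤ 16 / 3) :
    ∑ s, v s ^ 2 ≤ 16 + 80 * a := by
  have htail : ∑ _s : κ, 16 * (1 / 4 : ℝ) ^ l ≤ 16 := by
    rw [sum_const, card_univ, nsmul_eq_mul, one_div, inv_pow, mul_left_comm]
    refine mul_le_of_le_one_right (by norm_num) ((mul_inv_le_iff₀ (by positivity)).2 ?_)
    rw [one_mul]
    exact_mod_cast hl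
  have hlevels : ∑ s, ∑ j ∈ range l with 2 * (1 / 2) ^ j < v s, 12 * (1 / 4 : ℝ) ^ j
      ≤ ∑ j ∈ range l, 12 * a * ((1 / 4) ^ j * N j + (1 / 4) ^ j) := by
    simp_rw [sum_filter]
    rw [sum_comm]
    refine sum_le_sum fun j hj => ?_
    rw [← sum_filter, sum_const, nsmul_eq_mul]
    calc _ ≤ a * (N j + 1) * (12 * (1 / 4) ^ j) := by
          gcongr
          exact hcard j (mem_range.1 hj)
      _ = _ := by ring
  have hgeom : ∑ j ∈ range l, (1 / 4 : ℝ) ^ j ≤ 4 / 3 := by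
    rw [geom_sum_eq (by norm_num), div_le_iff_of_neg (by norm_num)]
    linarith [pow_nonneg (by norm_num : (0 : ℝ) ≤ 1 / 4) l]
  rw [← mul_sum, sum_add_distrib] at hlevels
  calc ∑ s, v s ^ 2
      ≤ ∑ s, (16 * (1 / 4) ^ l + ∑ j ∈ range l with 2 * (1 / 2) ^ j < v s, 12 * (1 / 4 : ℝ) ^ j) :=
        sum_le_sum fun s _ => sq_le_add_sum_filter_lt (hv0 s) (hv4 s) l
    _ ≤ 16 + 12 * a * (16 / 3 + 4 / 3) := by
        rw [sum_add_distrib]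
        refine add_le_add htail (hlevels.trans ?_)
        gcongr
    _ = 16 + 80 * a := by ring

end LayerCake

section Counting

open Finset

lemma card_selections_mul_two_pow_le {κ : Type*} [Fintype κ] (P : κ × Bool → Prop)
    [DecidablePred P] {A : ℕ} {S : Finset (κ → Bool)}
    (hS : ∀ e ∈ S, (∀ s, ¬P (s, e s)) ∧ A ≤ #{s | P (s, !e s)}) :
    #S * 2 ^ A ≤ 2 ^ Fintype.card κ := by
  classical
  rcases S.eq_empty_or_nonempty with rfl | ⟨e₀, he₀⟩
  · simp
  set U : Finset κ := {s | P (s, !e₀ s)} with hU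
  have hAU : A ≤ #U := (hS e₀ he₀).2
  have hsub : S ⊆ Fintype.piFinset fun s => if s ∈ U then {e₀ s} else univ := by
    refine fun e he => Fintype.mem_piFinset.2 fun s => ?_
    split_ifs with hs
    · rw [mem_singleton]
      by_contra hne
      rw [hU, mem_filter_univ, ← Bool.eq_not.2 hne] at hs
      exact (hS e he).1 s hs
    · exact mem_univ _
  have hcard : #(Fintype.piFinset fun s => if s ∈ U then {e₀ s} else univ) = 2 ^ #Uᶜ := by
    simp_rw [Fintype.card_piFinset, apply_ite card, card_singleton, card_univ, Fintype.card_bool]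
    rw [prod_ite, prod_const_one, one_mul, prod_const, filter_notMem_eq_sdiff, compl_eq_univ_sdiff]
  calc #S * 2 ^ A ≤ 2 ^ #Uᶜ * 2 ^ #U := by
        gcongr
        · exact (card_le_card hsub).trans_eq hcard
        · norm_num
    _ = 2 ^ Fintype.card κ := by rw [← pow_add, card_compl_add_card]

lemma card_le_of_forall_mem_list {α E : Type*} [Fintype α] (B : List α → Finset E) {N q : ℝ}
    (hN : 0 ≤ N) (hq : 0 ≤ q) (hB : ∀ D, (#(B D) : ℝ) ≤ N * q ^ (D.length + 1))
    (hα : Fintype.card α * q ≤ 1 / 2) {S : Finset E} {K : ℕ}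
    (hS : ∀ e ∈ S, ∃ D, D.length < K ∧ e ∈ B D) : (#S : ℝ) ≤ 2 * N * q := by
  classical
  have hsub : S ⊆ (range K).biUnion fun M => univ.biUnion fun D : Fin M → α => B (List.ofFn D) := by
    intro e he
    obtain ⟨D, hD, heD⟩ := hS e he
    simp only [mem_biUnion, mem_range, mem_univ, true_and]
    exact ⟨D.length, hD, D.get, by rwa [List.ofFn_get]⟩
  have hlength (M : ℕ) :
      (#(univ.biUnion fun D : Fin M → α => B (List.ofFn D)) : ℝ) ≤ N * q * (1 / 2) ^ M := by
    calc (#(univ.biUnion fun D : Fin M → α => B (List.ofFn D)) : ℝ)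
        ≤ ∑ D : Fin M → α, (#(B (List.ofFn D)) : ℝ) := by exact_mod_cast card_biUnion_le
      _ ≤ ∑ _D : Fin M → α, N * q ^ (M + 1) :=
          sum_le_sum fun D _ => by simpa only [List.length_ofFn] using hB (List.ofFn D)
      _ = N * q * (Fintype.card α * q) ^ M := by
          rw [sum_const, card_univ, Fintype.card_fun, Fintype.card_fin, nsmul_eq_mul]
          push_cast
          ring
      _ ≤ N * q * (1 / 2) ^ M := by gcongr
  have hgeom : ∑ M ∈ range K, (1 / 2 : ℝ) ^ M ≤ 2 := by
    rw [geom_sum_eq (by norm_num), div_le_iff_of_neg (by norm_num)]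
    linarith [pow_nonneg (by norm_num : (0 : ℝ) ≤ 1 / 2) K]
  calc (#S : ℝ) ≤ ∑ M ∈ range K, N * q * (1 / 2) ^ M := by
        refine le_trans ?_ (sum_le_sum fun M _ => hlength M)
        exact_mod_cast (card_le_card hsub).trans card_biUnion_le
    _ ≤ N * q * 2 := by
        rw [← mul_sum]
        gcongr
    _ = 2 * N * q := by ring

lemma two_mul_card_filter_lt_of_forall_perm {E Q : Type*} [Fintype E] [Fintype Q] [Nonempty Q]
    {Bad : Q → Prop} [DecidablePred Bad] (σ : E → Equiv.Perm Q)
    (h : ∀ q, 2 * #{e | Bad (σ e q)} < Fintype.card E) : 2 * #{q | Bad q} < Fintype.card Q := by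
  have hperm (e : E) : #{q | Bad (σ e q)} = #{q | Bad q} := by
    simp_rw [card_filter]
    exact Equiv.sum_comp (σ e) fun q => if Bad q then 1 else 0
  have hdouble : ∑ q, #{e | Bad (σ e q)} = Fintype.card E * #{q | Bad q} := by
    calc ∑ q, #{e | Bad (σ e q)} = ∑ e, #{q | Bad (σ e q)} := by
          simp_rw [card_filter]
          exact sum_comm
      _ = Fintype.card E * #{q | Bad q} := by
          rw [sum_congr rfl fun e _ => hperm e, sum_const, smul_eq_mul, card_univ]
  have hlt : ∑ q, 2 * #{e | Bad (σ e q)} < ∑ _q : Q, Fintype.card E :=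
    sum_lt_sum_of_nonempty univ_nonempty fun q _ => h q
  rw [← mul_sum, hdouble, sum_const, smul_eq_mul, card_univ, mul_left_comm,
    mul_comm (Fintype.card Q)] at hlt
  exact lt_of_mul_lt_mul_left' hlt

lemma exists_two_mul_card_fiber_lt {X Y : Type*} [Fintype X] [Fintype Y] {Bad : X × Y → Prop}
    [DecidablePred Bad] (h : 2 * #{q | Bad q} < Fintype.card (X × Y)) :
    ∃ x, 2 * #{y | Bad (x, y)} < Fintype.card Y := by
  by_contra! hcon
  refine h.not_ge ?_
  calc Fintype.card (X × Y) = ∑ _x : X, Fintype.card Y := by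
        rw [Fintype.card_prod, sum_const, smul_eq_mul, card_univ]
    _ ≤ ∑ x, 2 * #{y | Bad (x, y)} := sum_le_sum fun x _ => hcon x
    _ = 2 * #{q | Bad q} := by
        simp_rw [← mul_sum, card_filter, Fintype.sum_prod_type]

lemma exp_neg_le_one_sub_half {v : ℝ} (hv0 : 0 ≤ v) (hv1 : v ≤ 1) : Real.exp (-v) ≤ 1 - v / 2 := by
  rw [Real.exp_neg]
  refine (inv_anti₀ (by linarith) (Real.add_one_le_exp v)).trans ?_
  rw [inv_le_iff_one_le_mul₀ (by linarith)]
  nlinarith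

-- Markov's inequality for `exp (-∑ s, v (y s))`, whose mean factorizes.
lemma two_mul_card_le_of_sum_le {ι κ : Type*} [Fintype ι] [Fintype κ] [Nonempty ι] [Nonempty κ]
    {v : ι → ℝ} (hv0 : ∀ i, 0 ≤ v i) (hv1 : ∀ i, v i ≤ 1) {T : ℝ}
    (hT : 2 * Fintype.card ι / Fintype.card κ * (T + 1) < ∑ i, v i) {S : Finset (κ → ι)}
    (hS : ∀ y ∈ S, ∑ s, v (y s) ≤ T) : 2 * #S ≤ Fintype.card ι ^ Fintype.card κ := by
  have hmarkov : #S * Real.exp (-T) ≤ (∑ i, Real.exp (-v i)) ^ Fintype.card κ := by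
    classical
    rw [← card_univ, ← prod_const, prod_univ_sum, Fintype.piFinset_univ, ← nsmul_eq_mul,
      ← sum_const]
    refine (sum_le_sum fun y hy => ?_).trans
      (sum_le_univ_sum_of_nonneg fun y => by positivity)
    rw [← Real.exp_sum, sum_neg_distrib]
    exact Real.exp_le_exp.2 (neg_le_neg (hS y hy))
  have hmean : ∑ i, Real.exp (-v i) ≤
      Fintype.card ι * Real.exp (-((T + 1) / Fintype.card κ)) := by
    calc ∑ i, Real.exp (-v i) ≤ ∑ i, (1 - v i / 2) :=
          sum_le_sum fun i _ => exp_neg_le_one_sub_half (hv0 i) (hv1 i)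
      _ = Fintype.card ι - (∑ i, v i) / 2 := by
          rw [sum_sub_distrib, ← sum_div, sum_const, card_univ, nsmul_one]
      _ ≤ Fintype.card ι * (-((T + 1) / Fintype.card κ) + 1) := by
          rw [mul_div_assoc, mul_assoc, div_mul_eq_mul_div, mul_div_assoc] at hT
          linarith
      _ ≤ _ := by gcongr; exact Real.add_one_le_exp _
  have hpow : (∑ i, Real.exp (-v i)) ^ Fintype.card κ ≤
      Fintype.card ι ^ Fintype.card κ * Real.exp (-1) * Real.exp (-T) := by
    have hexp : Real.exp (-((T + 1) / Fintype.card κ)) ^ Fintype.card κ =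
        Real.exp (-1) * Real.exp (-T) := by
      rw [← Real.exp_nat_mul, ← Real.exp_add]
      congr 1
      field_simp
      ring
    rw [mul_assoc, ← hexp, ← mul_pow]
    gcongr
  have hcard : (#S : ℝ) ≤ Fintype.card ι ^ Fintype.card κ * Real.exp (-1) :=
    le_of_mul_le_mul_right (hmarkov.trans hpow) (Real.exp_pos _)
  have he : Real.exp (-1) ≤ 1 - 1 / 2 := exp_neg_le_one_sub_half zero_le_one le_rfl
  have hhalf : (2 : ℝ) * #S ≤ Fintype.card ι ^ Fintype.card κ := by
    nlinarith [mul_le_mul_of_nonneg_left he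
      (by positivity : (0 : ℝ) ≤ Fintype.card ι ^ Fintype.card κ)]
  exact_mod_cast hhalf

end Counting

section Selection

open Finset

/-- The permutation of pairs `(x, y)` of tuples which swaps `x s` and `y s` at all `s` with
`e s = true`. -/
def swapWhere {ι κ : Type*} (e : κ → Bool) : Equiv.Perm ((κ → ι) × (κ → ι)) :=
  Function.Involutive.toPerm
    (fun q => (fun s => bif e s then q.2 s else q.1 s, fun s => bif !e s then q.2 s else q.1 s))
    fun q => by ext s <;> cases hs : e s <;> simp [hs]

variable {V ι κ 𝕜 : Type*} [AddCommGroup V] [Module ℝ V] [RCLike 𝕜] [Fintype κ] {F : V → ℝ}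

/-- The center of the code `D` is bounded by `2⁻ʲ` along the functionals which `e` selects from the
pairs `c (s, false)`, `c (s, true)`, but exceeds `2⁻ʲ` along `a (|D| + 1)` of the rejected ones. -/
def IsSeparating (F : V → ℝ) (c : κ × Bool → V →ₗ[ℝ] 𝕜) (a : ℕ) {l : ℕ} (j : ℕ)
    (D : List (Cut (κ × Bool) l)) (e : κ → Bool) : Prop :=
  (∀ s, ¬(1 / 2) ^ j < ‖c (s, e s) (greedyCenter F c D)‖) ∧
    a * (D.length + 1) ≤ #{s | (1 / 2) ^ j < ‖c (s, !e s) (greedyCenter F c D)‖}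

/-- The unit ball `{F ≤ 1}` contains a point in the common kernel of the functionals `c (x s)` which
is large along the functionals `c (y s)`, in that the sum of the squares exceeds `T`. -/
def HasLargeKernelElement (F : V → ℝ) (c : ι → V →ₗ[ℝ] 𝕜) (T : ℝ) (x y : κ → ι) : Prop :=
  ∃ f, F f ≤ 1 ∧ (∀ s, c (x s) f = 0) ∧ T < ∑ s, ‖c (y s) f‖ ^ 2

lemma IsSeparating.length_lt {c : κ × Bool → V →ₗ[ℝ] 𝕜} {a l j : ℕ}
    {D : List (Cut (κ × Bool) l)} {e : κ → Bool} (ha : 1 ≤ a) (h : IsSeparating F c a j D e) :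
    D.length < Fintype.card κ := by
  have hcard := h.2.trans (card_le_univ _)
  nlinarith

lemma HasLargeKernelElement.exists_isSeparating {c : κ × Bool → V →ₗ[ℝ] 𝕜}
    (h : IsUniformlyConvexAlong F c) {a l : ℕ} (ha : 1 ≤ a) (hl : Fintype.card κ ≤ 4 ^ l)
    {e : κ → Bool}
    (he : HasLargeKernelElement F c (100 * a) (fun s => (s, e s)) fun s => (s, !e s)) :
    ∃ (j : Fin l) (D : List (Cut (κ × Bool) l)), IsSeparating F c a j D e := by
  obtain ⟨f, hf, hker, hlarge⟩ := he
  obtain ⟨D, happrox, hlength⟩ := h.exists_codes_approx l hf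
  by_contra! hcon
  have hcard : ∀ j < l, (#{s | 2 * (1 / 2) ^ j < ‖c (s, !e s) f‖} : ℝ) ≤
      a * ((D j).length + 1) := by
    intro j hj
    have hselected (s : κ) : ¬(1 / 2) ^ j < ‖c (s, e s) (greedyCenter F c (D j))‖ := by
      have happrox_s := happrox j hj (s, e s)
      rw [map_sub, hker, zero_sub, norm_neg] at happrox_s
      exact happrox_s.not_gt
    have hrejected : #{s | (1 / 2) ^ j < ‖c (s, !e s) (greedyCenter F c (D j))‖} <
        a * ((D j).length + 1) :=
      not_le.1 fun hle => hcon ⟨j, hj⟩ (D j) ⟨hselected, hle⟩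
    refine le_trans (Nat.cast_le.2 (card_le_card fun s hs => ?_)) (mod_cast hrejected.le)
    rw [mem_filter_univ] at hs ⊢
    have happrox_s := happrox j hj (s, !e s)
    rw [map_sub] at happrox_s
    linarith [norm_sub_norm_le (c (s, !e s) f) (c (s, !e s) (greedyCenter F c (D j)))]
  have hsum := sum_sq_le_of_card_filter_lt_le (fun s => norm_nonneg (c (s, !e s) f))
    (fun s => (h.norm_le_one hf _).trans (by norm_num)) hl a.cast_nonneg hcard hlength
  have ha1 : (1 : ℝ) ≤ a := by exact_mod_cast ha
  linarith

lemma card_le_of_forall_exists_isSeparating {c : κ × Bool → V →ₗ[ℝ] 𝕜} {a l j : ℕ}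
    (ha : 1 ≤ a) (hal : 16 * Fintype.card κ * l ≤ 2 ^ a) {S : Finset (κ → Bool)}
    (hS : ∀ e ∈ S, ∃ D : List (Cut (κ × Bool) l), IsSeparating F c a j D e) :
    (#S : ℝ) ≤ 2 * 2 ^ Fintype.card κ * (1 / 2) ^ a := by
  classical
  let B (D : List (Cut (κ × Bool) l)) : Finset (κ → Bool) := {e | IsSeparating F c a j D e}
  refine card_le_of_forall_mem_list B (K := Fintype.card κ) (by positivity) (by positivity)
    (fun D => ?_) ?_ fun e he => ?_
  · have hB := card_selections_mul_two_pow_le (S := B D)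
      (fun i : κ × Bool => (1 / 2) ^ j < ‖c i (greedyCenter F c D)‖)
      fun e he => (mem_filter_univ e).1 he
    rw [← pow_mul, one_div, inv_pow, ← div_eq_mul_inv, le_div_iff₀ (by positivity)]
    exact_mod_cast hB
  · have hal' : (16 : ℝ) * Fintype.card κ * l ≤ 2 ^ a := by exact_mod_cast hal
    rw [one_div, inv_pow, mul_inv_le_iff₀ (by positivity)]
    simp only [Fintype.card_prod, Fintype.card_bool, Fintype.card_fin]
    push_cast
    linarith
  · obtain ⟨D, hD⟩ := hS e he
    exact ⟨D, hD.length_lt ha, (mem_filter_univ e).2 hD⟩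

lemma two_mul_card_lt_of_forall_hasLargeKernelElement [Nonempty κ] {c : κ × Bool → V →ₗ[ℝ] 𝕜}
    (h : IsUniformlyConvexAlong F c) {a : ℕ} (ha : 16 * Fintype.card κ ^ 2 ≤ 2 ^ a)
    {S : Finset (κ → Bool)}
    (hS : ∀ e ∈ S, HasLargeKernelElement F c (100 * a) (fun s => (s, e s)) fun s => (s, !e s)) :
    2 * #S < 2 ^ Fintype.card κ := by
  classical
  set k := Fintype.card κ
  have hk : 1 ≤ k := Fintype.card_pos
  have ha1 : 1 ≤ a := by
    by_contra ha0
    rw [Nat.lt_one_iff.1 (not_le.1 ha0)] at ha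
    nlinarith
  let S' (j : Fin k) : Finset (κ → Bool) :=
    {e ∈ S | ∃ D : List (Cut (κ × Bool) k), IsSeparating F c a j D e}
  have hsub : S ⊆ univ.biUnion S' := fun e he => by
    obtain ⟨j, D, hD⟩ :=
      (hS e he).exists_isSeparating h ha1 (Nat.lt_pow_self (by norm_num : 1 < 4)).le
    exact mem_biUnion.2 ⟨j, mem_univ j, mem_filter.2 ⟨he, D, hD⟩⟩
  have hscale (j : Fin k) : (#(S' j) : ℝ) ≤ 2 * 2 ^ k * (1 / 2) ^ a :=
    card_le_of_forall_exists_isSeparating ha1 (by rwa [mul_assoc, ← sq])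
      fun e he => (mem_filter.1 he).2
  have hcard : (#S : ℝ) ≤ 2 ^ k * (2 * k / 2 ^ a) := by
    calc (#S : ℝ) ≤ ∑ j, (#(S' j) : ℝ) := by
          exact_mod_cast (card_le_card hsub).trans card_biUnion_le
      _ ≤ ∑ _j : Fin k, 2 * 2 ^ k * (1 / 2) ^ a := sum_le_sum fun j _ => hscale j
      _ = 2 ^ k * (2 * k / 2 ^ a) := by
          rw [sum_const, card_univ, Fintype.card_fin, nsmul_eq_mul, one_div_pow]
          ring
  have hratio : 2 * k / 2 ^ a < (1 / 2 : ℝ) := by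
    rw [div_lt_iff₀ (by positivity)]
    have hk' : (1 : ℝ) ≤ k := by exact_mod_cast hk
    have ha' : 16 * (k : ℝ) ^ 2 ≤ 2 ^ a := by exact_mod_cast ha
    nlinarith
  have hlt : (2 : ℝ) * #S < 2 ^ k := by
    nlinarith [mul_lt_mul_of_pos_left hratio (by positivity : (0 : ℝ) < 2 ^ k)]
  exact_mod_cast hlt

theorem IsUniformlyConvexAlong.exists_forall_sum_sq_le [Fintype ι] [Nonempty ι] [Nonempty κ]
    {c : ι → V →ₗ[ℝ] 𝕜} (h : IsUniformlyConvexAlong F c) {a : ℕ}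
    (ha : 16 * Fintype.card κ ^ 2 ≤ 2 ^ a) :
    ∃ x : κ → ι, ∀ f, F f ≤ 1 → (∀ s, c (x s) f = 0) →
      ∑ i, ‖c i f‖ ^ 2 ≤ 2 * Fintype.card ι / Fintype.card κ * (100 * a + 1) := by
  classical
  let Bad (q : (κ → ι) × (κ → ι)) : Prop := HasLargeKernelElement F c (100 * a) q.1 q.2
  have hswap (q) : 2 * #{e : κ → Bool | Bad (swapWhere e q)} < Fintype.card (κ → Bool) := by
    rw [Fintype.card_fun, Fintype.card_bool]
    exact two_mul_card_lt_of_forall_hasLargeKernelElement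
      (h.comp fun i : κ × Bool => bif i.2 then q.2 i.1 else q.1 i.1) ha
      fun e he => (mem_filter_univ e).1 he
  have hBad : 2 * #{q | Bad q} < Fintype.card ((κ → ι) × (κ → ι)) :=
    two_mul_card_filter_lt_of_forall_perm swapWhere hswap
  obtain ⟨x, hx⟩ := exists_two_mul_card_fiber_lt hBad
  refine ⟨x, fun f hf hker => ?_⟩
  by_contra! hlarge
  have hgood : 2 * #{y | ¬Bad (x, y)} ≤ Fintype.card ι ^ Fintype.card κ :=
    two_mul_card_le_of_sum_le (fun i => sq_nonneg ‖c i f‖)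
      (fun i => pow_le_one₀ (norm_nonneg _) (h.norm_le_one hf i)) hlarge
      fun y hy => not_lt.1 fun hlt => (mem_filter_univ y).1 hy ⟨f, hf, hker, hlt⟩
  have hsplit := card_filter_add_card_filter_not (s := univ) fun y : κ → ι => Bad (x, y)
  rw [card_univ] at hsplit
  rw [← Fintype.card_fun] at hgood
  omega

end Selection

namespace IsUniformlyConvexAlong

variable {V ι κ 𝕜 : Type*} [AddCommGroup V] [Module ℝ V] [RCLike 𝕜] [Fintype ι] {F : V → ℝ}
  {c : ι → V →ₗ[ℝ] 𝕜} {p : ℝ}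

lemma sum_sq_le_mul_rpow (h : IsUniformlyConvexAlong F c) (hp : 0 < p)
    (hF : ∀ (r : ℝ) (x : V), 0 ≤ r → F (r • x) = r ^ p * F x) {W : Submodule ℝ V} {M : ℝ}
    (hM : ∀ f ∈ W, F f ≤ 1 → ∑ i, ‖c i f‖ ^ 2 ≤ M) {f : V} (hf : f ∈ W) :
    ∑ i, ‖c i f‖ ^ 2 ≤ M * (F f ^ p⁻¹) ^ 2 := by
  rcases (h.nonneg f).eq_or_lt with hzero | hpos
  · have hc (i : ι) : ‖c i f‖ ^ 2 = 0 := by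
      have hle := h.norm_sq_le (hzero.symm.trans_le zero_le_one) i
      rw [← hzero, zero_div] at hle
      exact hle.antisymm (sq_nonneg _)
    rw [← hzero, Real.zero_rpow (inv_pos.2 hp).ne', Finset.sum_congr rfl fun i _ => hc i]
    simp
  · set r := F f ^ p⁻¹
    have hr : 0 < r := Real.rpow_pos_of_pos hpos _
    have hrp : r ^ p = F f := Real.rpow_inv_rpow hpos.le hp.ne'
    have hFr : F (r⁻¹ • f) = 1 := by
      rw [hF _ _ (inv_nonneg.2 hr.le), Real.inv_rpow hr.le, hrp, inv_mul_cancel₀ hpos.ne']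
    have hscaled := hM _ (W.smul_mem r⁻¹ hf) hFr.le
    simp_rw [map_smul, norm_smul, norm_inv, Real.norm_of_nonneg hr.le, mul_pow] at hscaled
    rwa [← Finset.mul_sum, inv_pow, inv_mul_le_iff₀ (by positivity), mul_comm] at hscaled

end IsUniformlyConvexAlong

lemma exists_sixteen_mul_sq_le_two_pow {k : ℕ} (hk : 2 ≤ k) :
    ∃ a : ℕ, 16 * k ^ 2 ≤ 2 ^ a ∧ 100 * a + 1 ≤ 1102 * Real.log k := by
  refine ⟨Nat.clog 2 (16 * k ^ 2), Nat.le_pow_clog one_lt_two _, ?_⟩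
  set a := Nat.clog 2 (16 * k ^ 2)
  have hk2 : 2 ≤ (k : ℝ) := by exact_mod_cast hk
  have hpred : 2 ^ a.pred < 2 ^ 4 * k ^ 2 := Nat.pow_pred_clog_lt_self one_lt_two (by nlinarith)
  have hpow : (2 : ℝ) ^ a ≤ 2 ^ 5 * k ^ 2 := by
    have ha : 2 ^ a ≤ 2 * 2 ^ a.pred := by
      rw [← pow_succ']
      exact Nat.pow_le_pow_right two_pos (by rw [Nat.pred_eq_sub_one]; omega)
    exact_mod_cast ha.trans (by linarith)
  have hlog := Real.log_le_log (by positivity) hpow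
  rw [Real.log_mul (by positivity) (by positivity), Real.log_pow, Real.log_pow, Real.log_pow]
    at hlog
  push_cast at hlog
  have hlog_two : Real.log 2 ≤ Real.log k := Real.log_le_log two_pos hk2
  have halog : a ≤ 11 * Real.log k := by
    nlinarith [Real.log_two_gt_d9, mul_nonneg (Nat.cast_nonneg' a : (0 : ℝ) ≤ a)
      (sub_nonneg.2 Real.log_two_gt_d9.le)]
  linarith [Real.log_two_gt_d9]

lemma norm_sqrt_smul_sq {E : Type*} [NormedAddCommGroup E] [NormedSpace ℝ E] {t : ℝ} (ht : 0 ≤ t)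
    (z : E) : ‖√t • z‖ ^ 2 = t * ‖z‖ ^ 2 := by
  rw [norm_smul, mul_pow, Real.norm_of_nonneg (Real.sqrt_nonneg t), Real.sq_sqrt ht]

section OrthonormalSystems

open ComplexConjugate

variable {𝕜 ι Ω : Type*} [RCLike 𝕜] {φ : ι → Ω → 𝕜} {L p : ℝ}

lemma linearCombination_apply_apply [Fintype ι] (x : ι → 𝕜) (ω : Ω) :
    Fintype.linearCombination 𝕜 φ x ω = ∑ i, x i * φ i ω := by
  simp only [Fintype.linearCombination_apply, Finset.sum_apply, Pi.smul_apply, smul_eq_mul]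

variable [MeasurableSpace Ω] {μ : Measure Ω}

lemma integral_norm_rpow_linearCombination_smul [Fintype ι] (r : ℝ) (hr : 0 ≤ r) (x : ι → 𝕜) :
    ∫ ω, ‖Fintype.linearCombination 𝕜 φ (r • x) ω‖ ^ p ∂μ =
      r ^ p * ∫ ω, ‖Fintype.linearCombination 𝕜 φ x ω‖ ^ p ∂μ := by
  rw [← integral_const_mul]
  congr with ω
  rw [LinearMap.map_smul_of_tower, Pi.smul_apply, norm_smul, Real.norm_of_nonneg hr,
    Real.mul_rpow hr (norm_nonneg _)]

variable [DecidableEq ι]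

/-- An orthonormal system in `L₂(μ)` whose members are bounded by `L` almost everywhere. -/
structure IsBoundedOrthonormal (μ : Measure Ω) (φ : ι → Ω → 𝕜) (L : ℝ) : Prop where
  aestronglyMeasurable : ∀ i, AEStronglyMeasurable (φ i) μ
  integral_conj_mul : ∀ i j, ∫ ω, conj (φ i ω) * φ j ω ∂μ = if i = j then 1 else 0
  norm_le : ∀ i, ∀ᵐ ω ∂μ, ‖φ i ω‖ ≤ L

namespace IsBoundedOrthonormal

lemma pos_bound [Nonempty ι] (h : IsBoundedOrthonormal μ φ L) : 0 < L := by
  obtain ⟨i⟩ := ‹Nonempty ι›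
  by_contra! hL
  have hzero : ∫ ω, conj (φ i ω) * φ i ω ∂μ = 0 := by
    refine integral_eq_zero_of_ae ?_
    filter_upwards [h.norm_le i] with ω hω
    rw [norm_le_zero_iff.1 (hω.trans hL), mul_zero, Pi.zero_apply]
  rw [h.integral_conj_mul, if_pos rfl] at hzero
  exact one_ne_zero hzero

variable [IsProbabilityMeasure μ]

lemma memLp (h : IsBoundedOrthonormal μ φ L) (i : ι) (q : ENNReal) : MemLp (φ i) q μ :=
  .of_bound (h.aestronglyMeasurable i) L (h.norm_le i)

lemma integrable_conj_mul (h : IsBoundedOrthonormal μ φ L) (j : ι) {f : Ω → 𝕜}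
    (hf : MemLp f 2 μ) : Integrable (fun ω => conj (φ j ω) * f ω) μ :=
  (h.memLp j 2).star.integrable_mul hf

variable [Fintype ι]

lemma memLp_linearCombination (h : IsBoundedOrthonormal μ φ L) (x : ι → 𝕜) (q : ENNReal) :
    MemLp (Fintype.linearCombination 𝕜 φ x) q μ := by
  rw [Fintype.linearCombination_apply]
  exact memLp_finsetSum' _ fun i _ => (h.memLp i q).const_smul (x i)

lemma integral_conj_mul_linearCombination (h : IsBoundedOrthonormal μ φ L) (x : ι → 𝕜) (j : ι) :
    ∫ ω, conj (φ j ω) * Fintype.linearCombination 𝕜 φ x ω ∂μ = x j := by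
  simp_rw [linearCombination_apply_apply, Finset.mul_sum, mul_left_comm _ (x _)]
  rw [integral_finsetSum _ fun i _ => (h.integrable_conj_mul j (h.memLp i 2)).const_mul (x i)]
  simp_rw [integral_const_mul, h.integral_conj_mul, mul_ite, mul_one, mul_zero]
  exact Fintype.sum_ite_eq j x

lemma norm_le_mul_integral_norm (h : IsBoundedOrthonormal μ φ L) (x : ι → 𝕜) (j : ι) :
    ‖x j‖ ≤ L * ∫ ω, ‖Fintype.linearCombination 𝕜 φ x ω‖ ∂μ := by
  have hint : Integrable (Fintype.linearCombination 𝕜 φ x) μ :=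
    memLp_one_iff_integrable.1 (h.memLp_linearCombination x 1)
  rw [← integral_const_mul]
  nth_rewrite 1 [← h.integral_conj_mul_linearCombination x j]
  refine norm_integral_le_of_norm_le (hint.norm.const_mul L) ?_
  filter_upwards [h.norm_le j] with ω hω
  rw [norm_mul, RCLike.norm_conj]
  gcongr

lemma integral_norm_sq_linearCombination (h : IsBoundedOrthonormal μ φ L) (x : ι → 𝕜) :
    ∫ ω, ‖Fintype.linearCombination 𝕜 φ x ω‖ ^ 2 ∂μ = ∑ i, ‖x i‖ ^ 2 := by
  have hexpand (ω : Ω) : ((‖Fintype.linearCombination 𝕜 φ x ω‖ ^ 2 : ℝ) : 𝕜) =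
      ∑ i, conj (x i) * (conj (φ i ω) * Fintype.linearCombination 𝕜 φ x ω) := by
    simp_rw [← mul_assoc, ← map_mul, ← Finset.sum_mul, ← map_sum,
      ← linearCombination_apply_apply, RCLike.conj_mul]
    push_cast
    rfl
  refine RCLike.ofReal_injective (K := 𝕜) ?_
  rw [← integral_ofReal]
  simp_rw [hexpand]
  rw [integral_finsetSum _ fun i _ =>
    (h.integrable_conj_mul i (h.memLp_linearCombination x 2)).const_mul _]
  simp_rw [integral_const_mul, h.integral_conj_mul_linearCombination, RCLike.conj_mul]
  push_cast
  rfl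

lemma eLpNorm_two_linearCombination (h : IsBoundedOrthonormal μ φ L) (x : ι → 𝕜) :
    eLpNorm (Fintype.linearCombination 𝕜 φ x) 2 μ = ENNReal.ofReal √(∑ i, ‖x i‖ ^ 2) := by
  rw [(h.memLp_linearCombination x 2).eLpNorm_eq_integral_rpow_norm two_ne_zero
    ENNReal.ofNat_ne_top, Real.sqrt_eq_rpow, ← h.integral_norm_sq_linearCombination x]
  simp only [ENNReal.toReal_ofNat, Real.rpow_ofNat, one_div]

lemma eLpNorm_linearCombination (h : IsBoundedOrthonormal μ φ L) (hp : 0 < p) (x : ι → 𝕜) :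
    eLpNorm (Fintype.linearCombination 𝕜 φ x) (ENNReal.ofReal p) μ =
      ENNReal.ofReal ((∫ ω, ‖Fintype.linearCombination 𝕜 φ x ω‖ ^ p ∂μ) ^ p⁻¹) := by
  rw [(h.memLp_linearCombination x _).eLpNorm_eq_integral_rpow_norm
    (ENNReal.ofReal_pos.2 hp).ne' ENNReal.ofReal_ne_top, ENNReal.toReal_ofReal hp.le]

lemma isUniformlyConvexAlong (h : IsBoundedOrthonormal μ φ L) (hp : 1 ≤ p) (hp2 : p ≤ 2) :
    IsUniformlyConvexAlong (fun x => ∫ ω, ‖Fintype.linearCombination 𝕜 φ x ω‖ ^ p ∂μ)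
      (fun i => √((p - 1) / (48 * L ^ 2)) • LinearMap.proj (R := ℝ) (φ := fun _ : ι => 𝕜) i) where
  nonneg x := integral_nonneg fun ω => by positivity
  map_zero := by simp [Real.zero_rpow (by linarith : p ≠ 0)]
  map_midpoint_add_le x y hx hy i := by
    have : Nonempty ι := ⟨i⟩
    have hL := h.pos_bound
    have hp1 : 0 ≤ p - 1 := by linarith
    have hmid (ω : Ω) : ‖Fintype.linearCombination 𝕜 φ (midpoint ℝ x y) ω‖ =
        ‖Fintype.linearCombination 𝕜 φ x ω + Fintype.linearCombination 𝕜 φ y ω‖ / 2 := by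
      rw [midpoint_eq_smul_add, LinearMap.map_smul_of_tower, map_add, Pi.smul_apply, norm_smul,
        Pi.add_apply, invOf_eq_inv, norm_inv, Real.norm_ofNat, inv_mul_eq_div]
    have hcoord := h.norm_le_mul_integral_norm (x - y) i
    simp_rw [map_sub, Pi.sub_apply] at hcoord
    have hnorm := norm_sqrt_smul_sq
      (div_nonneg hp1 (by positivity) : 0 ≤ (p - 1) / (48 * L ^ 2)) (x i - y i)
    let _ := InnerProductSpace.rclikeToReal 𝕜 𝕜
    have hconv := integral_rpow_norm_average_add_le hp hp2
      (h.memLp_linearCombination x _) (h.memLp_linearCombination y _) hx hy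
    simp_rw [hmid]
    refine le_trans ?_ hconv
    gcongr
    set d := ∫ ω, ‖Fintype.linearCombination 𝕜 φ x ω - Fintype.linearCombination 𝕜 φ y ω‖ ∂μ
    calc ‖√((p - 1) / (48 * L ^ 2)) • (x i - y i)‖ ^ 2
        = (p - 1) / (48 * L ^ 2) * ‖x i - y i‖ ^ 2 := hnorm
      _ ≤ (p - 1) / (48 * L ^ 2) * (L * d) ^ 2 := by gcongr
      _ = (p - 1) / 48 * d ^ 2 := by field_simp

lemma exists_forall_sum_norm_sq_le [Nonempty ι] (h : IsBoundedOrthonormal μ φ L) (hp : 1 < p)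
    (hp2 : p ≤ 2) {k : ℕ} (hk : 2 ≤ k) :
    ∃ x : Fin k → ι, ∀ f : ι → 𝕜, (∀ s, f (x s) = 0) →
      ∑ i, ‖f i‖ ^ 2 ≤ 400 ^ 2 * (L ^ 2 / (p - 1) * (Fintype.card ι / k) * Real.log k) *
        ((∫ ω, ‖Fintype.linearCombination 𝕜 φ f ω‖ ^ p ∂μ) ^ p⁻¹) ^ 2 := by
  have hp1 : 0 < p - 1 := by linarith
  have hL := h.pos_bound
  have : Nonempty (Fin k) := ⟨⟨0, by omega⟩⟩
  obtain ⟨a, ha, halog⟩ := exists_sixteen_mul_sq_le_two_pow hk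
  have hconvex := h.isUniformlyConvexAlong hp.le hp2
  obtain ⟨x, hx⟩ := hconvex.exists_forall_sum_sq_le (κ := Fin k) (by rwa [Fintype.card_fin])
  refine ⟨x, fun f hf => ?_⟩
  set I := (∫ ω, ‖Fintype.linearCombination 𝕜 φ f ω‖ ^ p ∂μ) ^ p⁻¹
  have hsum : (p - 1) / (48 * L ^ 2) * ∑ i, ‖f i‖ ^ 2 ≤
      2 * Fintype.card ι / k * (100 * a + 1) * I ^ 2 := by
    let c (i : ι) := √((p - 1) / (48 * L ^ 2)) • LinearMap.proj (R := ℝ) (φ := fun _ : ι => 𝕜) i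
    have hsum := hconvex.sum_sq_le_mul_rpow (by linarith) (fun r y hr =>
      integral_norm_rpow_linearCombination_smul r hr y) (W := ⨅ s, (c (x s)).ker) (f := f)
      (fun g hg hg1 => hx g hg1 <| by simpa only [Submodule.mem_iInf, LinearMap.mem_ker] using hg)
      (by simp [c, hf])
    simp_rw [LinearMap.smul_apply, LinearMap.proj_apply] at hsum
    rwa [Finset.sum_congr rfl fun i _ => norm_sqrt_smul_sq (by positivity) (f i),
      ← Finset.mul_sum, Fintype.card_fin] at hsum
  calc ∑ i, ‖f i‖ ^ 2
      = 48 * L ^ 2 / (p - 1) * ((p - 1) / (48 * L ^ 2) * ∑ i, ‖f i‖ ^ 2) := by field_simp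
    _ ≤ 48 * L ^ 2 / (p - 1) * (2 * Fintype.card ι / k * (1102 * Real.log k) * I ^ 2) := by
        refine mul_le_mul_of_nonneg_left (hsum.trans ?_) (by positivity)
        gcongr
    _ = 105792 * (L ^ 2 / (p - 1) * (Fintype.card ι / k) * Real.log k) * I ^ 2 := by ring
    _ ≤ 400 ^ 2 * (L ^ 2 / (p - 1) * (Fintype.card ι / k) * Real.log k) * I ^ 2 := by
        gcongr
        norm_num

lemma exists_forall_eLpNorm_two_le [Nonempty ι] (h : IsBoundedOrthonormal μ φ L) (hp : 1 < p)
    (hp2 : p ≤ 2) {k : ℕ} (hk : 2 ≤ k) :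
    ∃ x : Fin k → ι, ∀ f : ι → 𝕜, (∀ s, f (x s) = 0) →
      eLpNorm (Fintype.linearCombination 𝕜 φ f) 2 μ ≤
        ENNReal.ofReal (400 / √(p - 1) * L * √(Fintype.card ι / k) * √(Real.log k)) *
          eLpNorm (Fintype.linearCombination 𝕜 φ f) (ENNReal.ofReal p) μ := by
  have hL := h.pos_bound
  obtain ⟨x, hx⟩ := h.exists_forall_sum_norm_sq_le hp hp2 hk
  refine ⟨x, fun f hf => ?_⟩
  rw [h.eLpNorm_two_linearCombination, h.eLpNorm_linearCombination (by linarith),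
    ← ENNReal.ofReal_mul (by positivity)]
  refine ENNReal.ofReal_le_ofReal (Real.sqrt_le_iff.2 ⟨by positivity, (hx f hf).trans_eq ?_⟩)
  simp_rw [mul_pow, div_pow]
  rw [Real.sq_sqrt (sub_nonneg.2 hp.le), Real.sq_sqrt (by positivity),
    Real.sq_sqrt (by positivity)]
  ring

end IsBoundedOrthonormal

theorem stmt10_general [IsProbabilityMeasure μ] [Fintype ι] (hφ : IsBoundedOrthonormal μ φ L)
    (hp : 1 < p) (hp2 : p ≤ 2) {k : ℕ} (hk : 2 ≤ k) :
    ∃ I : Finset ι, Fintype.card ι - k ≤ I.card ∧ ∀ a : ι → 𝕜,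
      eLpNorm (fun ω => ∑ i ∈ I, a i * φ i ω) 2 μ ≤
        ENNReal.ofReal (400 / √(p - 1) * L * √(Fintype.card ι / k) * √(Real.log k)) *
          eLpNorm (fun ω => ∑ i ∈ I, a i * φ i ω) (ENNReal.ofReal p) μ := by
  rcases isEmpty_or_nonempty ι with hι | hι
  · exact ⟨∅, by simp, by simp⟩
  obtain ⟨x, hx⟩ := hφ.exists_forall_eLpNorm_two_le hp hp2 hk
  refine ⟨(Finset.univ.image x)ᶜ, ?_, fun a => ?_⟩
  · rw [Finset.card_compl]
    have hcard : (Finset.univ.image x).card ≤ k := by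
      simpa using Finset.card_image_le (s := Finset.univ) (f := x)
    omega
  · let f (i : ι) : 𝕜 := if i ∈ (Finset.univ.image x)ᶜ then a i else 0
    have hf : Fintype.linearCombination 𝕜 φ f =
        fun ω => ∑ i ∈ (Finset.univ.image x)ᶜ, a i * φ i ω := by
      funext ω
      simp_rw [linearCombination_apply_apply, f, ite_mul, zero_mul, ← Finset.sum_filter,
        Finset.filter_univ_mem]
    rw [← hf]
    exact hx f fun s => by simp [f]

end OrthonormalSystems

/-- selection of a subset of cardinality at least `n − k` of a bounded
orthonormal system on which `‖·‖_{L₂} ≤ (C/(p−1)^{5/2}) L √(n/k) √(log k) ‖·‖_{L_p}`. -/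
theorem stmt10 :
    ∃ C : ℝ, 0 < C ∧
      ∀ (Ω : Type*) [MeasurableSpace Ω] (P : Measure Ω) [IsProbabilityMeasure P]
        (n : ℕ) (φ : Fin n → Ω → ℂ) (L : ℝ),
        (∀ j, AEStronglyMeasurable (φ j) P) →
        (∀ i j, (∫ ω, (starRingEnd ℂ) (φ i ω) * φ j ω ∂P) = if i = j then 1 else 0) →
        (∀ j, ∀ᵐ ω ∂P, ‖φ j ω‖ ≤ L) →
        ∀ p : ℝ, 1 < p → p < 2 →
        ∀ k : ℕ, 2 ≤ k → k < n →
        ∃ I : Finset (Fin n), n - k ≤ I.card ∧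
          ∀ a : Fin n → ℂ,
            eLpNorm (fun ω => ∑ i ∈ I, a i * φ i ω) 2 P ≤
              ENNReal.ofReal
                  (C / (p - 1) ^ ((5 : ℝ) / 2) * L * Real.sqrt ((n : ℝ) / k) *
                    Real.sqrt (Real.log k)) *
                eLpNorm (fun ω => ∑ i ∈ I, a i * φ i ω) (ENNReal.ofReal p) P := by
  refine ⟨400, by norm_num, ?_⟩
  intro Ω _ P _ n φ L hmeas horth hbound p hp hp2 k hk hkn
  have hφ : IsBoundedOrthonormal P φ L := ⟨hmeas, horth, hbound⟩
  obtain ⟨I, hcard, hI⟩ := stmt10_general hφ hp hp2.le hk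
  rw [Fintype.card_fin] at hcard hI
  refine ⟨I, hcard, fun a => (hI a).trans ?_⟩
  have : Nonempty (Fin n) := ⟨⟨k, hkn⟩⟩
  have hL := hφ.pos_bound
  have hp1 : 0 < p - 1 := by linarith
  have hpow : (p - 1) ^ (5 / 2 : ℝ) ≤ √(p - 1) := by
    rw [Real.sqrt_eq_rpow]
    exact Real.rpow_le_rpow_of_exponent_ge hp1 (by linarith) (by norm_num)
  gcongr
end

section
/- Let N ≥ 2, let G = (ZMod 2)^N with the uniform probability measure, set n = 2^N, and let Ĝ be the group of the n characters of G, which form an orthonormal system in L₂(G) bounded by 1 in L∞. Then for every integer k with √n ≤ k ≤ n/2 and every subset I ⊆ Ĝ with |I| ≥ n − k, there exist complex coefficients (a_γ)_{γ ∈ I}, not all zero, such that ‖∑_{γ ∈ I} a_γ γ‖_{L₂(G)} ≥ √( (n·log n) / (20·k) ) · ‖∑_{γ ∈ I} a_γ γ‖_{L₁(G)}. In particular, no constant smaller than √( (n·log n)/(20k) ) can replace the constant in the L₂–L₁ comparison inequality on the span of (γ)_{γ ∈ I}. -/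
/-!
Put `n = |G|`. A coset `ξV` of a subgroup `V ≤ Ĝ` has character sum `|V| · ξ · 1_{V^⊥}`, whose `L₁`
norm is `1` and whose `L₂` norm is `√|V|`, so it suffices to find in `I` a coset with
`|V| ≥ n log n / (20 k)`. Adjoin generators to `V` one at a time: if `A` is the set of `a` with
`aV ⊆ I`, then `A ∩ A h⁻¹` plays the same role for `V ∪ hV`, which is a subgroup as `h² = 1`, and
averaging over `h ∉ V` gives an `h` for which it has density at least `(|A| / n)² - |V| / n`. After
`d` steps the density is still at least `(|I| / n) ^ 2 ^ d - d 2 ^ d / (2 n)`.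
Let `T = n log n / (20 k)` and take `T ≤ 2 ^ d ≤ 2 T` (or `d = 0` if `2 T < 1`). If `d ≥ 1`, then
`(|I| / n) ^ 2 ^ d ≥ (1 - k / n) ^ 2 ^ d` is at least `n ^ (-1 / 5)`, whereas `d 2 ^ d / n` is
`O((log n)² / √n)` because `√n ≤ k`.
-/

open Finset

section Averaging

variable {H : Type*} [Group H] [Fintype H] [DecidableEq H]

theorem sum_card_filter_mul_mem (A B : Finset H) :
    ∑ h, #{a ∈ A | a * h ∈ B} = #A * #B := by
  simp only [card_filter]
  rw [sum_comm, sum_const_nat]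
  intro a _
  exact (Equiv.sum_comp (Equiv.mulLeft a) fun h => if h ∈ B then 1 else 0).trans (by simp)

theorem exists_notMem_le_card_filter_mul_mem (A B V : Finset H) (hV : #V < Fintype.card H) :
    ∃ h ∉ V, #A * (#B - #V) ≤ Fintype.card H * #{a ∈ A | a * h ∈ B} := by
  have hne : Vᶜ.Nonempty := by
    rw [← card_pos, card_compl]
    lia
  have hsumV : ∑ h ∈ V, #{a ∈ A | a * h ∈ B} ≤ #A * #V :=
    (sum_le_card_nsmul _ _ _ fun h _ => card_filter_le _ _).trans_eq (mul_comm _ _)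
  have hsumVc : #A * (#B - #V) ≤ ∑ h ∈ Vᶜ, #{a ∈ A | a * h ∈ B} := by
    rw [Nat.mul_sub, ← sum_card_filter_mul_mem, ← sum_add_sum_compl V]
    lia
  obtain ⟨h, hh, hle⟩ : ∃ h ∈ Vᶜ, #A * (#B - #V) ≤ Fintype.card H * #{a ∈ A | a * h ∈ B} := by
    refine exists_le_of_sum_le hne ?_
    rw [sum_const, smul_eq_mul, ← mul_sum]
    exact Nat.mul_le_mul (card_le_univ _) hsumVc
  exact ⟨h, mem_compl.1 hh, hle⟩

end Averaging

section Adjoin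

variable {H : Type*} [CommGroup H] {V : Subgroup H} {h : H}

theorem mem_sup_zpowers_iff_of_mul_self (hh : h * h = 1) {x : H} :
    x ∈ V ⊔ Subgroup.zpowers h ↔ x ∈ V ∨ x * h ∈ V := by
  constructor
  · intro hx
    obtain ⟨v, hv, _, ⟨m, rfl⟩, rfl⟩ := Subgroup.mem_sup.1 hx
    obtain ⟨j, rfl | rfl⟩ := Int.even_or_odd' m <;>
      simp [zpow_add, zpow_mul, zpow_ofNat, pow_two, hh, mul_assoc, hv]
  · have hmem : h ∈ V ⊔ Subgroup.zpowers h :=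
      Subgroup.mem_sup_right (Subgroup.mem_zpowers h)
    rintro (hx | hx)
    · exact Subgroup.mem_sup_left hx
    · exact (Subgroup.mul_mem_cancel_right _ hmem).1 (Subgroup.mem_sup_left hx)

theorem card_sup_zpowers_of_mul_self (hh : h * h = 1) (hV : h ∉ V) :
    Nat.card ↥(V ⊔ Subgroup.zpowers h) = 2 * Nat.card V := by
  have hindex : V.relIndex (V ⊔ Subgroup.zpowers h) = 2 := by
    refine Subgroup.relIndex_eq_two_iff.2
      ⟨h, Subgroup.mem_sup_right (Subgroup.mem_zpowers h), fun b hb => ?_⟩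
    have hnot : ¬(b ∈ V ∧ b * h ∈ V) := fun ⟨hb, hbh⟩ => hV ((V.mul_mem_cancel_left hb).1 hbh)
    have hor := (mem_sup_zpowers_iff_of_mul_self hh).1 hb
    simp only [Xor]
    tauto
  rw [← Subgroup.relIndex_bot_left, ← Subgroup.relIndex_mul_relIndex ⊥ V _ bot_le le_sup_left,
    hindex, Subgroup.relIndex_bot_left, mul_comm]

end Adjoin

theorem sq_sub_two_mul_le_sq {x e α : ℝ} (hx₀ : 0 ≤ x) (hx₁ : x ≤ 1) (he : 0 ≤ e)
    (h : x - e ≤ α) : x ^ 2 - 2 * e ≤ α ^ 2 := by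
  rcases le_total x e with hxe | hxe <;> nlinarith

section CosetCore

variable {H : Type*} [CommGroup H] [Fintype H]

open Classical in
/-- The set of all representatives `a` of cosets `aV` contained in `I`, so that `aV ⊆ I` for some
`a` as soon as the set is nonempty. -/
noncomputable def cosetCore (V : Subgroup H) (I : Finset H) : Finset H :=
  {a | ∀ v ∈ V, a * v ∈ I}

theorem mem_cosetCore {V : Subgroup H} {I : Finset H} {a : H} :
    a ∈ cosetCore V I ↔ ∀ v ∈ V, a * v ∈ I := by
  simp only [cosetCore, mem_filter_univ]

theorem cosetCore_bot (I : Finset H) : cosetCore ⊥ I = I := by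
  ext a
  simp [mem_cosetCore]

theorem filter_mul_mem_cosetCore_subset [DecidableEq H] {V : Subgroup H} {h : H} (hh : h * h = 1)
    (I : Finset H) :
    {a ∈ cosetCore V I | a * h ∈ cosetCore V I} ⊆ cosetCore (V ⊔ Subgroup.zpowers h) I := by
  intro a ha
  rw [mem_filter, mem_cosetCore, mem_cosetCore] at ha
  refine mem_cosetCore.2 fun v hv => ?_
  rcases (mem_sup_zpowers_iff_of_mul_self hh).1 hv with hv | hv
  · exact ha.1 v hv
  · simpa [mul_assoc, mul_left_comm h v h, hh] using ha.2 (v * h) hv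

theorem exists_sq_sub_le_card_cosetCore_sup (hH : ∀ h : H, h * h = 1) (I : Finset H)
    (V : Subgroup H) (hV : Nat.card V < Fintype.card H) :
    ∃ h ∉ V, (#(cosetCore V I) / Fintype.card H : ℝ) ^ 2 - Nat.card V / Fintype.card H ≤
      #(cosetCore (V ⊔ Subgroup.zpowers h) I) / Fintype.card H := by
  classical
  have hcardV : #{x | x ∈ V} = Nat.card V := by
    rw [Nat.card_eq_fintype_card, ← Fintype.card_subtype]
  set A := cosetCore V I
  obtain ⟨h, hh, hle⟩ :=
    exists_notMem_le_card_filter_mul_mem A A {x | x ∈ V} (hcardV.trans_lt hV)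
  set A' := cosetCore (V ⊔ Subgroup.zpowers h) I
  have hcard : #A * #A ≤ Fintype.card H * (#A' + Nat.card V) := calc
    #A * #A ≤ #A * (#A - Nat.card V) + #A * Nat.card V := by
      rw [← mul_add]
      gcongr
      lia
    _ ≤ Fintype.card H * #A' + Fintype.card H * Nat.card V := by
      rw [hcardV] at hle
      refine add_le_add (hle.trans ?_) (Nat.mul_le_mul_right _ (card_le_univ A))
      gcongr
      exact filter_mul_mem_cosetCore_subset (hH h) I
    _ = Fintype.card H * (#A' + Nat.card V) := (mul_add _ _ _).symm
  refine ⟨h, by simpa using hh, ?_⟩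
  have hn : (0 : ℝ) < Fintype.card H := by exact_mod_cast Fintype.card_pos
  rw [div_pow, sub_le_iff_le_add, ← add_div, div_le_div_iff₀ (by positivity) hn]
  have hcard' : (#A * #A : ℝ) ≤ Fintype.card H * (#A' + Nat.card V) := by exact_mod_cast hcard
  nlinarith

theorem exists_subgroup_le_card_cosetCore (hH : ∀ h : H, h * h = 1) (I : Finset H) (d : ℕ)
    (hd : 2 ^ d ≤ Fintype.card H) :
    ∃ V : Subgroup H, Nat.card V = 2 ^ d ∧
      (#I / Fintype.card H : ℝ) ^ 2 ^ d - d * 2 ^ d / (2 * Fintype.card H) ≤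
        #(cosetCore V I) / Fintype.card H := by
  induction d with
  | zero => exact ⟨⊥, by simp, by simp [cosetCore_bot]⟩
  | succ d ih =>
    have hlt : 2 ^ d < Fintype.card H := (Nat.pow_lt_pow_succ one_lt_two).trans_le hd
    obtain ⟨V, hcard, hdens⟩ := ih hlt.le
    obtain ⟨h, hhV, hstep⟩ := exists_sq_sub_le_card_cosetCore_sup hH I V (hcard.trans_lt hlt)
    refine ⟨V ⊔ Subgroup.zpowers h, ?_, le_trans ?_ hstep⟩
    · rw [card_sup_zpowers_of_mul_self (hH h) hhV, hcard, pow_succ']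
    · have hle_one : (#I / Fintype.card H : ℝ) ≤ 1 :=
        div_le_one_of_le₀ (mod_cast card_le_univ I) (Nat.cast_nonneg _)
      have hsq := sq_sub_two_mul_le_sq (by positivity) (pow_le_one₀ (by positivity) hle_one)
        (by positivity) hdens
      rw [hcard]
      push_cast
      rw [pow_succ 2 d, pow_mul]
      calc _ = ((#I / Fintype.card H : ℝ) ^ 2 ^ d) ^ 2 - 2 * (d * 2 ^ d / (2 * Fintype.card H)) -
            2 ^ d / Fintype.card H := by ring
        _ ≤ _ := by gcongr

theorem exists_subgroup_coset_subset (hH : ∀ h : H, h * h = 1) (I : Finset H) (d : ℕ)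
    (hd : 2 ^ d ≤ Fintype.card H)
    (hI : (d * 2 ^ d / (2 * Fintype.card H) : ℝ) < (#I / Fintype.card H) ^ 2 ^ d) :
    ∃ (V : Subgroup H) (ξ : H), Nat.card V = 2 ^ d ∧ ∀ v ∈ V, ξ * v ∈ I := by
  obtain ⟨V, hcard, hle⟩ := exists_subgroup_le_card_cosetCore hH I d hd
  obtain ⟨ξ, hξ⟩ : (cosetCore V I).Nonempty := by
    rw [nonempty_iff_ne_empty]
    intro hempty
    rw [hempty, card_empty, Nat.cast_zero, zero_div] at hle
    linarith
  exact ⟨V, ξ, hcard, mem_cosetCore.1 hξ⟩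

end CosetCore

section Estimates

open Real

theorem exp_neg_two_mul_le_one_sub {x : ℝ} (hx₀ : 0 ≤ x) (hx : x ≤ 1 / 2) :
    exp (-(2 * x)) ≤ 1 - x := by
  have hpos : 0 < 1 - x := by linarith
  rw [← le_log_iff_exp_le hpos]
  refine le_trans ?_ (one_sub_inv_le_log_of_pos hpos)
  rw [neg_le_sub_iff_le_add, inv_le_iff_one_le_mul₀ hpos]
  nlinarith

theorem sq_lt_mul_exp {t : ℝ} (ht : 0 ≤ t) : t ^ 2 < 13 * exp (3 / 10 * t) := by
  have hlin : 2 / 5 * t ≤ exp (3 / 20 * t) := by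
    have := exp_one_mul_le_exp (x := 3 / 20 * t)
    nlinarith [exp_one_gt_d9]
  have hsq : exp (3 / 10 * t) = exp (3 / 20 * t) ^ 2 := by
    rw [← exp_nat_mul]
    ring_nf
  nlinarith [exp_pos (3 / 20 * t)]

theorem log_le_two_mul_sqrt {x : ℝ} (hx : 0 ≤ x) : log x ≤ 2 * √x := by
  have := log_le_self (sqrt_nonneg x)
  rw [log_sqrt hx] at this
  linarith

variable {n k : ℝ}

theorem exp_neg_log_div_five_le_pow {M : ℕ} (hk₀ : 0 < k) (hk : k ≤ n / 2)
    (hM : M ≤ n * log n / (10 * k)) :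
    exp (-(log n / 5)) ≤ (1 - k / n) ^ M := by
  have hn : 0 < n := by linarith
  have hkn : k / n ≤ 1 / 2 := by
    rw [div_le_iff₀ hn]
    linarith
  calc exp (-(log n / 5)) ≤ exp (-(2 * (k / n))) ^ M := by
        rw [← exp_nat_mul, exp_le_exp]
        have : M * (k / n) ≤ log n / 10 := calc
          M * (k / n) ≤ n * log n / (10 * k) * (k / n) := by gcongr
          _ = log n / 10 := by field_simp
        linarith
    _ ≤ (1 - k / n) ^ M := by
        gcongr
        exact exp_neg_two_mul_le_one_sub (by positivity) hkn

theorem mul_log_div_le_self (hn : 0 < n) (hk : √n ≤ k) : n * log n / (10 * k) ≤ n := by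
  have hk₀ : 0 < k := (sqrt_pos.2 hn).trans_le hk
  rw [div_le_iff₀ (by positivity)]
  gcongr
  linarith [log_le_two_mul_sqrt hn.le]

theorem mul_two_pow_div_lt_exp_neg_log {d : ℕ} (hn : 1 < n) (hk : √n ≤ k)
    (hd : 2 ^ d ≤ n * log n / (10 * k)) :
    d * 2 ^ d / (2 * n) < exp (-(log n / 5)) := by
  have hlog : 0 < log n := log_pos hn
  have hn₀ : 0 < n := by linarith
  have hsqrt : √n = exp (3 / 10 * log n) * exp (log n / 5) := by
    rw [← exp_add, sqrt_eq_rpow, rpow_def_of_pos hn₀]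
    ring_nf
  have hdensity : 2 ^ d / n ≤ log n / (10 * √n) := calc
    2 ^ d / n ≤ n * log n / (10 * k) / n := by gcongr
    _ = log n / (10 * k) := by field_simp
    _ ≤ log n / (10 * √n) := by gcongr
  have hd_le : d * 0.69 ≤ log n := calc
    d * 0.69 ≤ d * log 2 := by
      gcongr
      linarith [log_two_gt_d9]
    _ ≤ log n := by
      rw [← log_pow]
      exact log_le_log (by positivity) (hd.trans (mul_log_div_le_self hn₀ hk))
  calc d * 2 ^ d / (2 * n) = d * 0.69 * (2 ^ d / n) / 1.38 := by ring
    _ ≤ log n * (log n / (10 * √n)) / 1.38 := by gcongr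
    _ = log n ^ 2 / (13.8 * exp (3 / 10 * log n)) * exp (-(log n / 5)) := by
      rw [hsqrt, exp_neg]
      field_simp
      norm_num
    _ < 1 * exp (-(log n / 5)) := by
      gcongr
      rw [div_lt_one (by positivity)]
      linarith [sq_lt_mul_exp hlog.le, exp_pos (3 / 10 * log n)]
    _ = exp (-(log n / 5)) := one_mul _

theorem exists_two_pow_ge_and_lt_pow (hn : 0 < n) (hk₁ : √n ≤ k) (hk₂ : k ≤ n / 2) :
    ∃ d : ℕ, n * log n / (20 * k) ≤ 2 ^ d ∧ 2 ^ d ≤ n ∧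
      d * 2 ^ d / (2 * n) < (1 - k / n) ^ 2 ^ d := by
  have hk₀ : 0 < k := (sqrt_pos.2 hn).trans_le hk₁
  have hn₁ : 1 < n := by nlinarith [sq_sqrt hn.le, sqrt_pos.2 hn]
  have hhalf : n * log n / (10 * k) = 2 * (n * log n / (20 * k)) := by
    field_simp
    ring
  rcases lt_or_ge (n * log n / (10 * k)) 1 with hsmall | hlarge
  · refine ⟨0, by linarith, by simpa using hn₁.le, ?_⟩
    have : k / n < 1 := (div_lt_one hn).2 (by linarith)
    simpa using this
  · obtain ⟨d, hle, hlt⟩ := exists_nat_pow_near hlarge one_lt_two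
    refine ⟨d, ?_, hle.trans (mul_log_div_le_self hn hk₁), ?_⟩
    · rw [pow_succ] at hlt
      linarith
    · exact (mul_two_pow_div_lt_exp_neg_log hn₁ hk₁ hle).trans_le
        (exp_neg_log_div_five_le_pow hk₀ hk₂ (by exact_mod_cast hle))

end Estimates

theorem addChar_mul_self {A M : Type*} [AddCommMonoid A] [CommMonoid M]
    (hA : ∀ x : A, x + x = 0) (χ : AddChar A M) : χ * χ = 1 := by
  ext x
  rw [AddChar.mul_apply, ← AddChar.map_add_eq_mul, hA, AddChar.map_zero_eq_one, AddChar.one_apply]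

section Characters

variable {G : Type*} [AddCommGroup G]

open Classical in
theorem sum_subgroup_apply_eq_ite (V : Subgroup (AddChar G Circle)) [Fintype V] (x : G) :
    ∑ v : V, (v.1 x : ℂ) = if ∀ v : V, v.1 x = 1 then (Nat.card V : ℂ) else 0 := by
  let eval : V →* ℂ :=
    { toFun v := v.1 x
      map_one' := by simp
      map_mul' v w := by simp }
  have heval : eval = 1 ↔ ∀ v : V, v.1 x = 1 := by
    simp only [MonoidHom.ext_iff]
    exact forall_congr' fun v => Circle.coe_eq_one
  rw [← if_congr heval rfl rfl, Nat.card_eq_fintype_card]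
  exact (sum_hom_units eval).trans (by push_cast; rfl)

theorem norm_sum_subgroup_apply_sq (V : Subgroup (AddChar G Circle)) [Fintype V] (x : G) :
    ‖∑ v : V, (v.1 x : ℂ)‖ ^ 2 = Nat.card V * ‖∑ v : V, (v.1 x : ℂ)‖ := by
  rw [sum_subgroup_apply_eq_ite]
  split_ifs <;> simp [sq]

open Classical in
theorem sum_ite_coset_mul_apply {V : Subgroup (AddChar G Circle)} [Fintype V]
    {ξ : AddChar G Circle} {I : Finset (AddChar G Circle)} (hI : ∀ v ∈ V, ξ * v ∈ I) (x : G) :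
    ∑ γ ∈ I, (if ξ⁻¹ * γ ∈ V then 1 else 0) * (γ x : ℂ) = ξ x * ∑ v : V, (v.1 x : ℂ) := by
  simp only [ite_mul, one_mul, zero_mul]
  rw [← sum_filter, mul_sum]
  refine (sum_bij (fun v _ => ξ * v.1) (fun v _ => ?_) (fun v _ w _ h => ?_) (fun γ hγ => ?_)
    fun v _ => ?_).symm
  · simp [hI]
  · exact Subtype.ext (mul_left_cancel h)
  · exact ⟨⟨ξ⁻¹ * γ, (mem_filter.1 hγ).2⟩, mem_univ _, mul_inv_cancel_left ξ γ⟩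
  · simp

variable [Fintype G]

noncomputable instance : Fintype (AddChar G Circle) :=
  Fintype.ofEquiv _ AddChar.circleEquivComplex.symm.toEquiv

theorem card_addChar_circle : Fintype.card (AddChar G Circle) = Fintype.card G := by
  rw [Fintype.card_congr (AddChar.circleEquivComplex (α := G)).toEquiv, AddChar.card_eq]

open Classical in
theorem sum_circle_addChar_eq_ite (χ : AddChar G Circle) :
    ∑ x, (χ x : ℂ) = if χ = 1 then (Fintype.card G : ℂ) else 0 := by
  have h : AddChar.circleEquivComplex χ = 0 ↔ χ = 1 :=
    map_eq_zero_iff _ AddChar.circleEquivComplex.injective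
  rw [← if_congr h rfl rfl]
  exact AddChar.sum_eq_ite (AddChar.circleEquivComplex χ)

theorem sum_norm_sum_subgroup_apply (V : Subgroup (AddChar G Circle)) [Fintype V] :
    ∑ x, ‖∑ v : V, (v.1 x : ℂ)‖ = Fintype.card G := by
  have hnorm (x : G) : (‖∑ v : V, (v.1 x : ℂ)‖ : ℂ) = ∑ v : V, (v.1 x : ℂ) := by
    rw [sum_subgroup_apply_eq_ite]
    split_ifs <;> simp
  have hsum : ∑ x, (‖∑ v : V, (v.1 x : ℂ)‖ : ℂ) = Fintype.card G := by
    simp only [hnorm]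
    rw [sum_comm, Fintype.sum_eq_single 1]
    · simp
    · intro v hv
      rw [sum_circle_addChar_eq_ite, if_neg (by simpa using hv)]
  exact_mod_cast hsum

end Characters

theorem stmt15_general {G : Type*} [AddCommGroup G] [Fintype G] (hG : ∀ x : G, x + x = 0) (k : ℝ)
    (hk₁ : √(Fintype.card G) ≤ k) (hk₂ : k ≤ (Fintype.card G : ℝ) / 2)
    (I : Finset (AddChar G Circle)) (hI : Fintype.card G - k ≤ #I) :
    ∃ a : AddChar G Circle → ℂ,
      (∃ γ ∈ I, a γ ≠ 0) ∧
      √(Fintype.card G * Real.log (Fintype.card G) / (20 * k)) *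
          ((Fintype.card G : ℝ)⁻¹ * ∑ x, ‖∑ γ ∈ I, a γ * (γ x : ℂ)‖) ≤
        √((Fintype.card G : ℝ)⁻¹ * ∑ x, ‖∑ γ ∈ I, a γ * (γ x : ℂ)‖ ^ 2) := by
  classical
  have hn : (0 : ℝ) < Fintype.card G := by exact_mod_cast Fintype.card_pos
  obtain ⟨d, hT, hdn, hd⟩ := exists_two_pow_ge_and_lt_pow hn hk₁ hk₂
  have hdens : 1 - k / Fintype.card G ≤ #I / Fintype.card G := by
    rw [one_sub_div hn.ne']
    gcongr
  have hdens₀ : 0 ≤ 1 - k / Fintype.card G := by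
    rw [sub_nonneg, div_le_one hn]
    linarith
  obtain ⟨V, ξ, hV, hξ⟩ := exists_subgroup_coset_subset (addChar_mul_self hG) I d
    (by rw [card_addChar_circle]; exact_mod_cast hdn)
    (by rw [card_addChar_circle]; exact hd.trans_le (by gcongr))
  refine ⟨fun γ => if ξ⁻¹ * γ ∈ V then 1 else 0, ⟨ξ, by simpa using hξ 1 V.one_mem, by simp⟩, ?_⟩
  simp only [sum_ite_coset_mul_apply hξ, norm_mul, Circle.norm_coe, one_mul,
    norm_sum_subgroup_apply_sq, ← mul_sum, sum_norm_sum_subgroup_apply]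
  rw [mul_left_comm _ (Nat.card V : ℝ), inv_mul_cancel₀ hn.ne', mul_one, mul_one, hV]
  exact_mod_cast Real.sqrt_le_sqrt hT

/-- near-optimality of the selection theorem for the Walsh system. With
`G = (ZMod 2)^N`, `n = 2^N`, and `Ĝ` the group of characters of `G` (an orthonormal system
in `L₂(G)` bounded by `1` in `L∞`), for every `k` with `√n ≤ k ≤ n/2` and every `I ⊆ Ĝ` with
`|I| ≥ n − k` there are coefficients, not all zero, with
`‖∑_{γ ∈ I} a_γ γ‖_{L₂} ≥ √(n log n / (20 k)) ‖∑_{γ ∈ I} a_γ γ‖_{L₁}`, the `L_p` norms being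
taken with respect to the uniform probability measure:
`‖f‖_{L_p} = ((1/|G|) ∑_x ‖f x‖^p)^{1/p}`. -/
theorem stmt15 (N : ℕ) (hN : 2 ≤ N) (k : ℕ)
    (hk₁ : Real.sqrt (2 ^ N) ≤ k) (hk₂ : (k : ℝ) ≤ (2 : ℝ) ^ N / 2)
    (I : Finset (AddChar (Fin N → ZMod 2) Circle))
    (hI : 2 ^ N - k ≤ I.card) :
    ∃ a : AddChar (Fin N → ZMod 2) Circle → ℂ,
      (∃ γ ∈ I, a γ ≠ 0) ∧
      Real.sqrt ((2 : ℝ) ^ N * Real.log ((2 : ℝ) ^ N) / (20 * k)) *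
          (((2 : ℝ) ^ N)⁻¹ * ∑ x : Fin N → ZMod 2, ‖∑ γ ∈ I, a γ * (γ x : ℂ)‖) ≤
        Real.sqrt (((2 : ℝ) ^ N)⁻¹ *
          ∑ x : Fin N → ZMod 2, ‖∑ γ ∈ I, a γ * (γ x : ℂ)‖ ^ 2) := by
  have hcard : (Fintype.card (Fin N → ZMod 2) : ℝ) = 2 ^ N := by simp
  have hI' : (2 : ℝ) ^ N - k ≤ #I := by
    rw [sub_le_iff_le_add]
    exact_mod_cast Nat.sub_le_iff_le_add.1 hI
  simpa only [hcard] using stmt15_general (G := Fin N → ZMod 2)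
    (fun x => funext fun i => CharTwo.add_self_eq_zero (x i)) k (by rwa [hcard]) (by rwa [hcard]) I
    (by rwa [hcard])
end
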